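/- If A is not K-trivial and X ≥_T A″, then there exists a Martin-Löf random sequence R with R ≱_T ∅′ such that A ⊕ R ≡_T X and A and R form a minimal pair (every set computable from both A and R is computable). -/

import Mathlib

open MeasureTheory ENNReal

/-! ### Cantor space and the uniform (coin-flipping) measure -/

/-- The binary digits of a real number in `[0,1)`, giving a point of Cantor space. -/
noncomputable def binaryDigits (x : ℝ) : ℕ → Bool :=
  fun n => decide (⌊x * 2 ^ (n + 1)⌋ % 2 = 1)

/-- The uniform (Lebesgue / coin-flipping) measure on Cantor space `2^ω`,
obtained as the pushforward of Lebesgue measure on `[0,1)` under binary expansion. -/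
noncomputable def μCantor : Measure (ℕ → Bool) :=
  Measure.map binaryDigits (volume.restrict (Set.Ico (0 : ℝ) 1))

/-- `σ` is an initial segment of the infinite sequence `X`. -/
def IsPrefixOf (σ : List Bool) (X : ℕ → Bool) : Prop :=
  ∀ i : Fin σ.length, X i = σ.get i

/-- The cylinder determined by a finite binary string. -/
def cylinder (σ : List Bool) : Set (ℕ → Bool) := {X | IsPrefixOf σ X}

/-- The open set generated by a set of finite binary strings. -/
def openOf (S : Set (List Bool)) : Set (ℕ → Bool) := ⋃ σ ∈ S, cylinder σ

/-- The density of a set `P` above the string `τ`: `μ([τ] ∩ P) · 2^{|τ|}`. -/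
noncomputable def dens (τ : List Bool) (P : Set (ℕ → Bool)) : ℝ≥0∞ :=
  μCantor (cylinder τ ∩ P) * 2 ^ τ.length

/-- The length-`n` initial segment of `X`, as a finite binary string. -/
def strPrefix (X : ℕ → Bool) (n : ℕ) : List Bool := (List.range n).map X

/-- A set of strings is prefix-free if no element is a proper prefix of another. -/
def PrefixFreeSet (S : Set (List Bool)) : Prop :=
  ∀ σ ∈ S, ∀ τ ∈ S, σ <+: τ → σ = τ

/-- The weight `∑_{σ ∈ S} 2^{-|σ|}` of a set of strings. -/
noncomputable def weight (S : Set (List Bool)) : ℝ≥0∞ :=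
  ∑' σ : S, 2⁻¹ ^ (σ : List Bool).length

/-- A set of strings is bounded if its weight is finite. -/
def BoundedStr (S : Set (List Bool)) : Prop := weight S < ⊤

/-- The tail `X(·+k)` of an infinite binary sequence. -/
def tailSeq (X : ℕ → Bool) (k : ℕ) : ℕ → Bool := fun n => X (n + k)

/-! ### Oracle computability -/

/-- The `e`-th computably enumerable set of naturals (the domain of the `e`-th
partial computable function). -/
def WEnum (e n : ℕ) : Prop := ((Denumerable.ofNat Nat.Partrec.Code e).eval n).Dom

/-- `OracleComputes e X n m` holds if the `e`-th Turing functional with oracle `X`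
outputs `m` on input `n`; a Turing functional is presented by the c.e. set `W_e`
of coded axioms `(σ, n, m)`, and `Γ_e^X(n) = m` iff some initial segment `σ` of `X`
has `(σ, n, m) ∈ W_e`. -/
def OracleComputes (e : ℕ) (X : ℕ → Bool) (n m : ℕ) : Prop :=
  ∃ σ : List Bool, IsPrefixOf σ X ∧
    WEnum e (Nat.pair (Encodable.encode σ) (Nat.pair n m))

def natOfBool (b : Bool) : ℕ := cond b 1 0

/-- `f : ℕ → ℕ` is computable with oracle `A`: some Turing functional with oracle `A`
has graph exactly `f`. -/
def FnComputableIn (f : ℕ → ℕ) (A : ℕ → Bool) : Prop :=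
  ∃ e, ∀ n m, OracleComputes e A n m ↔ m = f n

/-- Turing reducibility `B ≤_T A` for subsets of `ω` (as elements of Cantor space). -/
def TuringLE (B A : ℕ → Bool) : Prop := FnComputableIn (fun n => natOfBool (B n)) A

/-- Turing equivalence. -/
def TuringEquiv (A B : ℕ → Bool) : Prop := TuringLE A B ∧ TuringLE B A

/-- The Turing join `A ⊕ B`. -/
def joinSet (A B : ℕ → Bool) : ℕ → Bool :=
  fun n => if n % 2 = 0 then A (n / 2) else B (n / 2)

open Classical in
/-- The Turing jump `A′ = {e : Γ_e^A(e)↓}`. -/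
noncomputable def jump (A : ℕ → Bool) : ℕ → Bool :=
  fun e => decide (∃ m, OracleComputes e A e m)

/-- The empty oracle. -/
def emptyOracle : ℕ → Bool := fun _ => false

/-- The halting problem `∅′`. -/
noncomputable def zeroJump : ℕ → Bool := jump emptyOracle

/-- A set is computable iff it is Turing reducible to the empty oracle. -/
def ComputableSet (A : ℕ → Bool) : Prop := TuringLE A emptyOracle

/-- A set of naturals is c.e. in `A`. -/
def CeIn (A : ℕ → Bool) (S : Set ℕ) : Prop :=
  ∃ e, ∀ n, n ∈ S ↔ ∃ m, OracleComputes e A n m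

/-- A set of strings is c.e. in `A`. -/
def CeStrIn (A : ℕ → Bool) (S : Set (List Bool)) : Prop :=
  ∃ e, ∀ σ : List Bool, σ ∈ S ↔ ∃ m, OracleComputes e A (Encodable.encode σ) m

/-- A c.e. set of strings. -/
def CeStr (S : Set (List Bool)) : Prop := CeStrIn emptyOracle S

/-! ### Π⁰₁ classes, Martin-Löf randomness, K-triviality -/

/-- A `Π⁰₁(A)` class: the complement of the union of cylinders over an `A`-c.e.
set of strings. -/
def Pi01In (A : ℕ → Bool) (P : Set (ℕ → Bool)) : Prop :=
  ∃ S : Set (List Bool), CeStrIn A S ∧ P = (openOf S)ᶜ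

/-- A `Π⁰₁` class. -/
def Pi01 (P : Set (ℕ → Bool)) : Prop := Pi01In emptyOracle P

/-- The `n`-th level of the `e`-th `A`-effective sequence of open sets. -/
def testLevel (e : ℕ) (A : ℕ → Bool) (n : ℕ) : Set (ℕ → Bool) :=
  openOf {σ | ∃ m, OracleComputes e A (Nat.pair n (Encodable.encode σ)) m}

/-- A Martin-Löf test relative to `A`: a uniformly `A`-c.e. sequence of open sets
`G n` with `μ(G n) ≤ 2^{-n}`. -/
def MLTestIn (A : ℕ → Bool) (G : ℕ → Set (ℕ → Bool)) : Prop :=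
  (∃ e, ∀ n, G n = testLevel e A n) ∧ ∀ n, μCantor (G n) ≤ 2⁻¹ ^ n

/-- `X` is Martin-Löf random relative to `A`: it passes every `A`-Martin-Löf test. -/
def MLRandomIn (A X : ℕ → Bool) : Prop :=
  ∀ G : ℕ → Set (ℕ → Bool), MLTestIn A G → ∃ n, X ∉ G n

/-- `X` is Martin-Löf random. -/
def MLRandom (X : ℕ → Bool) : Prop := MLRandomIn emptyOracle X

/-- The domain of the `e`-th machine, viewed as a set of binary strings. -/
def machineDom (e : ℕ) : Set (List Bool) :=
  {σ | ((Denumerable.ofNat Nat.Partrec.Code e).eval (Encodable.encode σ)).Dom}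

/-- The `e`-th machine is prefix-free. -/
def PrefixFreeMachine (e : ℕ) : Prop := PrefixFreeSet (machineDom e)

/-- Prefix-free Kolmogorov complexity (defined, up to an additive constant, as the
least `|σ| + 2e + 2` over prefix-free machines `e` and programs `σ` producing `x`). -/
noncomputable def Kcpx (x : ℕ) : ℕ :=
  sInf {k | ∃ e, ∃ σ : List Bool, PrefixFreeMachine e ∧
    x ∈ (Denumerable.ofNat Nat.Partrec.Code e).eval (Encodable.encode σ) ∧
    k = σ.length + 2 * e + 2}

/-- `K(n)` means `K(1^n)`. -/
noncomputable def KofNat (n : ℕ) : ℕ := Kcpx (Encodable.encode (List.replicate n true))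

/-- `A` is K-trivial: `K(A↾n) ≤ K(n) + c` for some constant `c`. -/
def KTrivial (A : ℕ → Bool) : Prop :=
  ∃ c, ∀ n, Kcpx (Encodable.encode (strPrefix A n)) ≤ KofNat n + c

section
attribute [fun_prop] Computable

namespace DM

section Comp
variable {α β γ δ : Type*} [Primcodable α] [Primcodable β] [Primcodable γ] [Primcodable δ]

@[fun_prop] theorem c_id : Computable (fun x : α => x) := Computable.id
@[fun_prop] theorem c_const (b : β) : Computable (fun _ : α => b) := Computable.const b
@[fun_prop] theorem c_comp {f : β → γ} {g : α → β} (hf : Computable f) (hg : Computable g) :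
    Computable (fun x => f (g x)) := hf.comp hg
@[fun_prop] theorem c_pair {f : α → β} {g : α → γ} (hf : Computable f) (hg : Computable g) :
    Computable (fun x => (f x, g x)) := hf.pair hg
@[fun_prop] theorem c_fst {f : α → β × γ} (hf : Computable f) :
    Computable (fun x => (f x).1) := Computable.fst.comp hf
@[fun_prop] theorem c_snd {f : α → β × γ} (hf : Computable f) :
    Computable (fun x => (f x).2) := Computable.snd.comp hf
@[fun_prop] theorem c_getElem? {f : α → List β} {g : α → ℕ} (hf : Computable f)
    (hg : Computable g) : Computable (fun x => (f x)[g x]?) := Computable.list_getElem?.comp hf hg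
@[fun_prop] theorem c_npair {f : α → ℕ} {g : α → ℕ} (hf : Computable f) (hg : Computable g) :
    Computable (fun x => Nat.pair (f x) (g x)) := Primrec₂.natPair.to_comp.comp hf hg
@[fun_prop] theorem c_unpair {f : α → ℕ} (hf : Computable f) :
    Computable (fun x => Nat.unpair (f x)) := Computable.unpair.comp hf
@[fun_prop] theorem c_encode {f : α → β} (hf : Computable f) :
    Computable (fun x => Encodable.encode (f x)) := Computable.encode.comp hf
@[fun_prop] theorem c_decode {f : α → ℕ} (hf : Computable f) :
    Computable (fun x => (Encodable.decode (f x) : Option β)) := Computable.decode.comp hf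
@[fun_prop] theorem c_length {f : α → List β} (hf : Computable f) :
    Computable (fun x => (f x).length) := Computable.list_length.comp hf
@[fun_prop] theorem c_take {f : α → ℕ} {g : α → List β} (hf : Computable f) (hg : Computable g) :
    Computable (fun x => (g x).take (f x)) := Primrec.list_take.to_comp.comp hf hg
@[fun_prop] theorem c_append {f : α → List β} {g : α → List β} (hf : Computable f)
    (hg : Computable g) : Computable (fun x => (f x) ++ (g x)) := Computable.list_append.comp hf hg
@[fun_prop] theorem c_cons {f : α → β} {g : α → List β} (hf : Computable f)
    (hg : Computable g) : Computable (fun x => (f x) :: (g x)) := Computable.list_cons.comp hf hg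
@[fun_prop] theorem c_isSome {f : α → Option β} (hf : Computable f) :
    Computable (fun x => (f x).isSome) := Primrec.option_isSome.to_comp.comp hf
@[fun_prop] theorem c_some {f : α → β} (hf : Computable f) :
    Computable (fun x => some (f x)) := Computable.option_some.comp hf
@[fun_prop] theorem c_and {f g : α → Bool} (hf : Computable f) (hg : Computable g) :
    Computable (fun x => f x && g x) := (Primrec.dom_bool₂ _).to_comp.comp hf hg
@[fun_prop] theorem c_or {f g : α → Bool} (hf : Computable f) (hg : Computable g) :
    Computable (fun x => f x || g x) := (Primrec.dom_bool₂ _).to_comp.comp hf hg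
@[fun_prop] theorem c_not {f : α → Bool} (hf : Computable f) :
    Computable (fun x => !(f x)) := (Primrec.dom_bool _).to_comp.comp hf
@[fun_prop] theorem c_add {f g : α → ℕ} (hf : Computable f) (hg : Computable g) :
    Computable (fun x => f x + g x) := Primrec.nat_add.to_comp.comp hf hg
@[fun_prop] theorem c_sub {f g : α → ℕ} (hf : Computable f) (hg : Computable g) :
    Computable (fun x => f x - g x) := Primrec.nat_sub.to_comp.comp hf hg
@[fun_prop] theorem c_mul {f g : α → ℕ} (hf : Computable f) (hg : Computable g) :
    Computable (fun x => f x * g x) := Primrec.nat_mul.to_comp.comp hf hg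
@[fun_prop] theorem c_div {f g : α → ℕ} (hf : Computable f) (hg : Computable g) :
    Computable (fun x => f x / g x) := Primrec.nat_div.to_comp.comp hf hg
@[fun_prop] theorem c_mod {f g : α → ℕ} (hf : Computable f) (hg : Computable g) :
    Computable (fun x => f x % g x) := Primrec.nat_mod.to_comp.comp hf hg
@[fun_prop] theorem c_pow {f g : α → ℕ} (hf : Computable f) (hg : Computable g) :
    Computable (fun x => f x ^ g x) :=
  (Primrec₂.unpaired'.1 Nat.Primrec.pow).to_comp.comp hf hg
@[fun_prop] theorem c_le {f g : α → ℕ} (hf : Computable f) (hg : Computable g) :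
    Computable (fun x => decide (f x ≤ g x)) :=
  (Primrec.nat_le.decide.to_comp.comp hf hg : _)
@[fun_prop] theorem c_lt {f g : α → ℕ} (hf : Computable f) (hg : Computable g) :
    Computable (fun x => decide (f x < g x)) :=
  (Primrec.nat_lt.decide.to_comp.comp hf hg : _)
@[fun_prop] theorem c_eq [DecidableEq β] {f g : α → β} (hf : Computable f) (hg : Computable g) :
    Computable (fun x => decide (f x = g x)) :=
  (Primrec.eq.decide.to_comp.comp hf hg : _)
@[fun_prop] theorem c_cond {c : α → Bool} {f g : α → β} (hc : Computable c) (hf : Computable f)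
    (hg : Computable g) : Computable (fun x => bif c x then f x else g x) :=
  Computable.cond hc hf hg
@[fun_prop] theorem c_getD {f : α → Option β} {g : α → β} (hf : Computable f)
    (hg : Computable g) : Computable (fun x => (f x).getD (g x)) :=
  Computable.option_getD hf hg
@[fun_prop] theorem c_evaln {k : α → ℕ} {c : α → Nat.Partrec.Code} {n : α → ℕ}
    (hk : Computable k) (hc : Computable c) (hn : Computable n) :
    Computable (fun x => Nat.Partrec.Code.evaln (k x) (c x) (n x)) :=
  Nat.Partrec.Code.primrec_evaln.to_comp.comp ((hk.pair hc).pair hn)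
@[fun_prop] theorem c_ofNat {f : α → ℕ} (hf : Computable f) :
    Computable (fun x => Denumerable.ofNat Nat.Partrec.Code (f x)) :=
  (Computable.ofNat _).comp hf

/-- Bounded universal quantification as a Boolean function. -/
def ballB (n : ℕ) (f : ℕ → Bool) : Bool := Nat.rec true (fun i acc => acc && f i) n

theorem ballB_iff (n : ℕ) (f : ℕ → Bool) : ballB n f = true ↔ ∀ i < n, f i = true := by
  induction n with
  | zero => simp [ballB]
  | succ n ih =>
    have : ballB (n+1) f = (ballB n f && f n) := rfl
    rw [this, Bool.and_eq_true, ih]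
    constructor
    · rintro ⟨h1, h2⟩ i hi
      rcases Nat.lt_succ_iff_lt_or_eq.1 hi with h | rfl
      · exact h1 i h
      · exact h2
    · intro h
      exact ⟨fun i hi => h i (by omega), h n (by omega)⟩

theorem c_ball {f : α → ℕ} {g : α → ℕ → Bool} (hf : Computable f)
    (hg : Computable (fun p : α × ℕ => g p.1 p.2)) :
    Computable (fun a => ballB (f a) (g a)) := by
  refine Computable.nat_rec (h := fun a p => p.2 && g a p.1) hf (Computable.const true) ?_
  have : Computable (fun q : α × (ℕ × Bool) => q.2.2 && (fun p : α × ℕ => g p.1 p.2) (q.1, q.2.1)) := by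
    fun_prop
  exact this

end Comp

/-! ### Relativised Sigma-one predicates -/

theorem length_strPrefix (X : ℕ → Bool) (n : ℕ) : (strPrefix X n).length = n := by
  simp [strPrefix]

theorem getElem?_strPrefix (X : ℕ → Bool) (n i : ℕ) :
    (strPrefix X n)[i]? = if i < n then some (X i) else none := by
  simp only [strPrefix, List.getElem?_map]
  split_ifs with h
  · simp [List.getElem?_range h]
  · simp [h]

theorem isPrefixOf_iff (σ : List Bool) (X : ℕ → Bool) :
    IsPrefixOf σ X ↔ ∀ i < σ.length, σ[i]? = some (X i) := by
  constructor
  · intro h i hi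
    have := h ⟨i, hi⟩
    simp at this
    simp [hi, this]
  · intro h i
    have := h i i.2
    simp at this
    simp [this]

theorem isPrefixOf_iff' (σ : List Bool) (X : ℕ → Bool) :
    IsPrefixOf σ X ↔ strPrefix X σ.length = σ := by
  rw [isPrefixOf_iff]
  constructor
  · intro h
    apply List.ext_getElem?
    intro i
    rw [getElem?_strPrefix]
    split_ifs with hi
    · exact (h i hi).symm
    · simp at hi; simp [hi]
  · intro h i hi
    conv_lhs => rw [← h]
    rw [getElem?_strPrefix, if_pos hi]

theorem isPrefixOf_strPrefix (X : ℕ → Bool) (n : ℕ) : IsPrefixOf (strPrefix X n) X := by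
  rw [isPrefixOf_iff', length_strPrefix]

theorem take_strPrefix (X : ℕ → Bool) (m n : ℕ) (h : m ≤ n) :
    (strPrefix X n).take m = strPrefix X m := by
  apply List.ext_getElem?
  intro i
  rw [List.getElem?_take, getElem?_strPrefix, getElem?_strPrefix]
  grind

/-- `p` is `Σ⁰₁` relative to the oracle `X`. -/
def Sig (X : ℕ → Bool) {α : Type*} [Primcodable α] (p : α → Prop) : Prop :=
  ∃ d : List Bool × α → Bool, Computable d ∧ ∀ a, p a ↔ ∃ t, d (strPrefix X t, a) = true

section Sig
variable {α β γ δ : Type*} [Primcodable α] [Primcodable β] [Primcodable γ] [Primcodable δ]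
variable {X : ℕ → Bool}

theorem Sig.of_eq {p q : α → Prop} (h : Sig X p) (e : ∀ a, p a ↔ q a) : Sig X q := by
  obtain ⟨d, hd, H⟩ := h
  exact ⟨d, hd, fun a => (e a).symm.trans (H a)⟩

theorem Sig.comp {p : β → Prop} {f : α → β} (h : Sig X p) (hf : Computable f) :
    Sig X (fun a => p (f a)) := by
  obtain ⟨d, hd, H⟩ := h
  exact ⟨fun q => d (q.1, f q.2), by fun_prop, fun a => H (f a)⟩

theorem Sig.mono' {p : α → Prop} (h : Sig X p) :
    ∃ d : List Bool × α → Bool, Computable d ∧ (∀ s t a, s ≤ t →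
      d (strPrefix X s, a) = true → d (strPrefix X t, a) = true) ∧
      ∀ a, p a ↔ ∃ t, d (strPrefix X t, a) = true := by
  obtain ⟨d, hd, H⟩ := h
  refine ⟨fun q => !(ballB (q.1.length + 1) (fun i => !(d (q.1.take i, q.2)))), ?_, ?_⟩
  · have := c_ball (f := fun q : List Bool × α => q.1.length + 1)
      (g := fun q i => !(d (q.1.take i, q.2))) (by fun_prop) (by fun_prop)
    fun_prop
  · have key : ∀ t a, (!(ballB ((strPrefix X t).length + 1)
        (fun i => !(d ((strPrefix X t).take i, a))))) = true ↔ ∃ i ≤ t, d (strPrefix X i, a) = true := by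
      intro t a
      rw [Bool.not_eq_true', ← Bool.not_eq_true, ballB_iff, length_strPrefix]
      push Not
      constructor
      · rintro ⟨i, hi, h⟩
        rw [take_strPrefix X i t (by omega)] at h
        exact ⟨i, by omega, by simpa using h⟩
      · rintro ⟨i, hi, h⟩
        refine ⟨i, by omega, ?_⟩
        rw [take_strPrefix X i t (by omega)]
        simpa using h
    refine ⟨?_, ?_⟩
    · intro s t a hst h
      rw [key] at h ⊢
      obtain ⟨i, hi, h⟩ := h
      exact ⟨i, by omega, h⟩
    · intro a
      rw [H]
      constructor
      · rintro ⟨t, ht⟩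
        exact ⟨t, (key t a).2 ⟨t, le_rfl, ht⟩⟩
      · rintro ⟨t, ht⟩
        obtain ⟨i, -, h⟩ := (key t a).1 ht
        exact ⟨i, h⟩

theorem Sig.and {p q : α → Prop} (hp : Sig X p) (hq : Sig X q) : Sig X (fun a => p a ∧ q a) := by
  obtain ⟨d, hd, m, H⟩ := hp.mono'
  obtain ⟨d', hd', m', H'⟩ := hq.mono'
  refine ⟨fun a => d a && d' a, by fun_prop, fun a => ?_⟩
  simp only [H, H']
  constructor
  · rintro ⟨⟨s, hs⟩, t, ht⟩
    exact ⟨max s t, by simp [m s _ a (le_max_left s t) hs, m' t _ a (le_max_right s t) ht]⟩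
  · rintro ⟨t, ht⟩
    simp at ht
    exact ⟨⟨t, ht.1⟩, t, ht.2⟩

theorem Sig.or {p q : α → Prop} (hp : Sig X p) (hq : Sig X q) : Sig X (fun a => p a ∨ q a) := by
  obtain ⟨d, hd, H⟩ := hp
  obtain ⟨d', hd', H'⟩ := hq
  refine ⟨fun a => d a || d' a, by fun_prop, fun a => ?_⟩
  simp only [H, H', ← exists_or]
  simp

theorem Sig.ex {p : α × β → Prop} (hp : Sig X p) : Sig X (fun a => ∃ b, p (a, b)) := by
  obtain ⟨d, hd, H⟩ := hp
  refine ⟨fun q => ((Encodable.decode (α := β) q.1.length.unpair.1).map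
    (fun b => d (q.1.take q.1.length.unpair.2, (q.2, b)))).getD false, ?_, fun a => ?_⟩
  · refine Computable.option_getD (Computable.option_map (by fun_prop) ?_) (by fun_prop)
    show Computable (fun r : (List Bool × α) × β =>
      d (r.1.1.take r.1.1.length.unpair.2, (r.1.2, r.2)))
    fun_prop
  · simp only [H, length_strPrefix]
    constructor
    · rintro ⟨b, t, ht⟩
      refine ⟨Nat.pair (Encodable.encode b) t, ?_⟩
      simp only [Nat.unpair_pair, Encodable.encodek, Option.map_some, Option.getD_some]
      rw [take_strPrefix _ _ _ (Nat.right_le_pair _ _)]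
      exact ht
    · rintro ⟨u, hu⟩
      cases hb : (Encodable.decode (α := β) u.unpair.1) with
      | none => simp [hb] at hu
      | some b =>
        simp only [hb, Option.map_some, Option.getD_some] at hu
        rw [take_strPrefix _ _ _ (Nat.unpair_right_le u)] at hu
        exact ⟨b, _, hu⟩

theorem Sig.of_dec {f : α → Bool} (h : Computable f) : Sig X (fun a => f a = true) :=
  ⟨fun q => f q.2, by fun_prop, fun a => by simp⟩

theorem Sig.of_decide {p : α → Prop} [DecidablePred p] (h : Computable (fun a => decide (p a))) :
    Sig X p := (Sig.of_dec h).of_eq (by simp)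

theorem Sig.ball {p : α × ℕ → Prop} (hp : Sig X p) :
    Sig X (fun a : α × ℕ => ∀ i < a.2, p (a.1, i)) := by
  obtain ⟨d, hd, m, H⟩ := hp.mono'
  refine ⟨fun q => ballB q.2.2 (fun i => d (q.1, (q.2.1, i))), c_ball (by fun_prop) (by fun_prop),
    fun a => ?_⟩
  simp only [ballB_iff, H]
  constructor
  · intro h
    choose! t ht using h
    refine ⟨(Finset.range a.2).sup t, fun i hi => m (t i) _ _ ?_ (ht i hi)⟩
    exact Finset.le_sup (f := t) (by simpa using hi)
  · rintro ⟨t, ht⟩ i hi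
    exact ⟨t, ht i hi⟩

/-- bounded quantifier with a computable bound -/
theorem Sig.ball' {p : α → ℕ → Prop} {f : α → ℕ} (hf : Computable f)
    (hp : Sig X (fun q : α × ℕ => p q.1 q.2)) :
    Sig X (fun a => ∀ i < f a, p a i) :=
  (Sig.ball hp).comp (f := fun a => (a, f a)) (by fun_prop)

theorem Sig.ex' {p : α → β → Prop} (hp : Sig X (fun q : α × β => p q.1 q.2)) :
    Sig X (fun a => ∃ b, p a b) := Sig.ex hp

theorem Sig.oracle : Sig X (fun p : ℕ × Bool => X p.1 = p.2) := by
  refine ⟨fun q => decide (q.1[q.2.1]? = some q.2.2), by fun_prop, fun a => ?_⟩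
  simp only [getElem?_strPrefix, decide_eq_true_eq]
  constructor
  · intro h
    exact ⟨a.1 + 1, by simp [h]⟩
  · rintro ⟨t, ht⟩
    split_ifs at ht
    simpa using ht

theorem Sig.pre : Sig X (fun σ : List Bool => IsPrefixOf σ X) := by
  refine ⟨fun q => decide (q.1 = q.2), by fun_prop, fun a => ?_⟩
  simp only [decide_eq_true_eq]
  constructor
  · intro h
    exact ⟨a.length, (isPrefixOf_iff' _ _).1 h⟩
  · rintro ⟨t, rfl⟩
    exact isPrefixOf_strPrefix X t

theorem Sig.mem_list {l : α → List ℕ} {p : α → ℕ → Prop} (hl : Computable l)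
    (hp : Sig X (fun q : α × ℕ => p q.1 q.2)) : Sig X (fun a => ∃ n ∈ l a, p a n) := by
  have : Sig X (fun q : α × ℕ × ℕ => (l q.1)[q.2.1]? = some q.2.2 ∧ p q.1 q.2.2) :=
    (Sig.of_decide (by fun_prop)).and (hp.comp (f := fun q : α × ℕ × ℕ => (q.1, q.2.2)) (by fun_prop))
  refine this.ex.of_eq fun a => ?_
  constructor
  · rintro ⟨⟨i, n⟩, h1, h2⟩
    exact ⟨n, List.mem_of_getElem? h1, h2⟩
  · rintro ⟨n, h1, h2⟩
    obtain ⟨i, hi⟩ := List.mem_iff_getElem?.1 h1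
    exact ⟨(i, n), hi, h2⟩

theorem exists_code_of_re {p : α → Prop} (h : REPred p) :
    ∃ c : Nat.Partrec.Code, ∀ a, (c.eval (Encodable.encode a)).Dom ↔ p a := by
  obtain ⟨c, hc⟩ := Nat.Partrec.Code.exists_code.1 h
  refine ⟨c, fun a => ?_⟩
  rw [hc]
  simp [Part.assert]

theorem evaln_dom (c : Nat.Partrec.Code) (n : ℕ) :
    (c.eval n).Dom ↔ ∃ k, (Nat.Partrec.Code.evaln k c n).isSome = true := by
  rw [Part.dom_iff_mem]
  simp only [Nat.Partrec.Code.evaln_complete, Option.isSome_iff_exists]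
  rw [exists_comm]
  rfl

theorem Sig.of_re {p : α → Prop} (h : REPred p) : Sig X p := by
  obtain ⟨c, hc⟩ := exists_code_of_re h
  refine ⟨fun q => (Nat.Partrec.Code.evaln q.1.length c (Encodable.encode q.2)).isSome,
    by fun_prop, fun a => ?_⟩
  rw [← hc, evaln_dom]
  simp [length_strPrefix]

theorem re_of_dec {d : α × ℕ → Bool} (hd : Computable d) {p : α → Prop}
    (h : ∀ a, p a ↔ ∃ t, d (a, t) = true) : REPred p := by
  have : Partrec (fun a => Nat.rfind (fun n => (Part.some (d (a, n)) : Part Bool))) :=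
    Partrec.rfind (p := fun a n => Part.some (d (a, n))) hd.partrec.to₂
  refine this.dom_re.of_eq fun a => ?_
  rw [h]
  refine Nat.rfind_dom.trans ?_
  simp only [Part.mem_some_iff, Part.some_dom, implies_true, and_true]
  exact exists_congr fun _ => eq_comm

theorem Sig.re {p : α → Prop} (h : Sig emptyOracle p) : REPred p := by
  obtain ⟨d, hd, H⟩ := h
  refine re_of_dec (d := fun q => d (((List.range q.2).map emptyOracle), q.1)) ?_ H
  have : Computable (fun n : ℕ => (List.range n).map emptyOracle) :=
    (Primrec.list_map Primrec.list_range (Primrec₂.const false)).to_comp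
  exact hd.comp ((this.comp Computable.snd).pair Computable.fst)

theorem Sig.of_empty {p : α → Prop} (h : Sig emptyOracle p) : Sig X p := Sig.of_re h.re

theorem smn {q : α × β → Prop} (h : REPred q) : ∃ f : α → ℕ, Computable f ∧
    ∀ a b, WEnum (f a) (Encodable.encode b) ↔ q (a, b) := by
  obtain ⟨c, hc⟩ := exists_code_of_re h
  refine ⟨fun a => Encodable.encode (Nat.Partrec.Code.curry c (Encodable.encode a)), ?_, fun a b => ?_⟩
  · exact Computable.encode.comp
      (Nat.Partrec.Code.primrec₂_curry.to_comp.comp (Computable.const c) Computable.encode)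
  · rw [WEnum, Denumerable.ofNat_encode, Nat.Partrec.Code.eval_curry, ← hc]
    rfl

theorem wenum_re : REPred (fun p : ℕ × ℕ => WEnum p.1 p.2) := by
  refine re_of_dec (d := fun q => (Nat.Partrec.Code.evaln q.2
    (Denumerable.ofNat Nat.Partrec.Code q.1.1) q.1.2).isSome) (by fun_prop) fun a => ?_
  rw [WEnum, evaln_dom]

theorem Sig.wenum : Sig X (fun p : ℕ × ℕ => WEnum p.1 p.2) := Sig.of_re wenum_re

theorem Sig.oc : Sig X (fun p : ℕ × ℕ × ℕ => OracleComputes p.1 X p.2.1 p.2.2) := by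
  have h1 : Sig X (fun q : (ℕ × ℕ × ℕ) × List Bool => IsPrefixOf q.2 X) :=
    Sig.pre.comp (by fun_prop)
  have h2 : Sig X (fun q : (ℕ × ℕ × ℕ) × List Bool => WEnum q.1.1
      (Nat.pair (Encodable.encode q.2) (Nat.pair q.1.2.1 q.1.2.2))) :=
    Sig.wenum.comp (f := fun q : (ℕ × ℕ × ℕ) × List Bool => (q.1.1,
      (Nat.pair (Encodable.encode q.2) (Nat.pair q.1.2.1 q.1.2.2)))) (by fun_prop)
  exact (h1.and h2).ex

theorem Sig.index {p : α × ℕ × ℕ → Prop} (h : Sig X p) : ∃ f : α → ℕ, Computable f ∧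
    ∀ a n m, OracleComputes (f a) X n m ↔ p (a, n, m) := by
  obtain ⟨d, hd, H⟩ := h
  have : REPred (fun q : α × (List Bool × ℕ × ℕ) => d (q.2.1, (q.1, q.2.2)) = true) := by
    apply ComputablePred.to_re
    apply Computable.computablePred
    simp only [Bool.decide_eq_true]
    fun_prop
  obtain ⟨f, hf, hf'⟩ := smn this
  refine ⟨f, hf, fun a n m => ?_⟩
  rw [H, OracleComputes]
  have key : ∀ σ : List Bool, WEnum (f a) (Nat.pair (Encodable.encode σ) (Nat.pair n m)) ↔
      d (σ, (a, n, m)) = true := fun σ => hf' a (σ, n, m)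
  simp only [key]
  constructor
  · rintro ⟨σ, h1, h2⟩
    exact ⟨σ.length, by rw [(isPrefixOf_iff' _ _).1 h1]; exact h2⟩
  · rintro ⟨t, ht⟩
    exact ⟨_, isPrefixOf_strPrefix X t, ht⟩

theorem turingLE_iff {B : ℕ → Bool} : TuringLE B X ↔ Sig X (fun p : ℕ × Bool => B p.1 = p.2) := by
  constructor
  · rintro ⟨e, he⟩
    have : Sig X (fun p : ℕ × Bool => OracleComputes e X p.1 (bif p.2 then 1 else 0)) :=
      Sig.oc.comp (f := fun p : ℕ × Bool => (e, p.1, (bif p.2 then 1 else 0))) (by fun_prop)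
    refine this.of_eq fun p => ?_
    rw [he]
    rcases p with ⟨n, b⟩
    cases b <;> cases h : B n <;> simp [natOfBool, h]
  · intro h
    have : Sig X (fun q : Unit × ℕ × ℕ => (B q.2.1 = true ∧ q.2.2 = 1) ∨ (B q.2.1 = false ∧ q.2.2 = 0)) := by
      refine Sig.or (Sig.and ?_ (Sig.of_decide (by fun_prop))) (Sig.and ?_ (Sig.of_decide (by fun_prop)))
      · exact h.comp (f := fun q : Unit × ℕ × ℕ => (q.2.1, true)) (by fun_prop)
      · exact h.comp (f := fun q : Unit × ℕ × ℕ => (q.2.1, false)) (by fun_prop)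
    obtain ⟨f, -, hf⟩ := this.index
    refine ⟨f (), fun n m => ?_⟩
    rw [hf]
    cases h : B n <;> simp [natOfBool, h]

theorem Sig.trans {Y : ℕ → Bool} {p : α → Prop} (h : Sig Y p) (hY : TuringLE Y X) : Sig X p := by
  rw [turingLE_iff] at hY
  obtain ⟨d, hd, H⟩ := h
  have h1 : Sig X (fun q : (α × List Bool) × ℕ => ∃ b, q.1.2[q.2]? = some b ∧ Y q.2 = b) := by
    refine Sig.ex' ((Sig.of_decide (by fun_prop)).and ?_)
    exact hY.comp (f := fun q : ((α × List Bool) × ℕ) × Bool => (q.1.2, q.2)) (by fun_prop)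
  have h2 : Sig X (fun q : α × List Bool => d (q.2, q.1) = true) := Sig.of_dec (by fun_prop)
  have h3 := ((h1.ball' (f := fun q : α × List Bool => q.2.length)
    (p := fun q i => ∃ b, q.2[i]? = some b ∧ Y i = b) (by fun_prop)).and h2).ex
  refine h3.of_eq fun a => ?_
  rw [H]
  have key : ∀ σ : List Bool, (∀ i < σ.length, ∃ b, σ[i]? = some b ∧ Y i = b) ↔ IsPrefixOf σ Y := by
    intro σ
    rw [isPrefixOf_iff]
    simp
  simp only [key]
  constructor
  · rintro ⟨σ, h1, h2⟩
    exact ⟨σ.length, by rw [(isPrefixOf_iff' _ _).1 h1]; exact h2⟩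
  · rintro ⟨t, ht⟩
    exact ⟨_, isPrefixOf_strPrefix Y t, ht⟩

theorem turingLE_trans {A B C : ℕ → Bool} (h1 : TuringLE A B) (h2 : TuringLE B C) : TuringLE A C :=
  turingLE_iff.2 ((turingLE_iff.1 h1).trans h2)

theorem Sig.jump_index {p : α → Prop} (h : Sig X p) : ∃ f : α → ℕ, Computable f ∧
    ∀ a, p a ↔ jump X (f a) = true := by
  have : Sig X (fun q : α × ℕ × ℕ => p q.1) := h.comp (by fun_prop)
  obtain ⟨f, hf, H⟩ := this.index
  refine ⟨f, hf, fun a => ?_⟩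
  simp [jump, H]

theorem Sig.jump {p : α → Prop} (h : Sig X p) : Sig (_root_.jump X) p := by
  obtain ⟨f, hf, H⟩ := h.jump_index
  exact (Sig.oracle.comp (f := fun a => (f a, true)) (by fun_prop)).of_eq fun a => (H a).symm

theorem Sig.not_jump {p : α → Prop} (h : Sig X p) : Sig (_root_.jump X) (fun a => ¬ p a) := by
  obtain ⟨f, hf, H⟩ := h.jump_index
  exact (Sig.oracle.comp (f := fun a => (f a, false)) (by fun_prop)).of_eq fun a => by
    simp [H a]

theorem turingLE_jump : TuringLE X (jump X) := turingLE_iff.2 Sig.oracle.jump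

theorem computable_of_sig {B : ℕ → Bool} (h : Sig emptyOracle (fun p : ℕ × Bool => B p.1 = p.2)) :
    ComputableSet B := turingLE_iff.2 h

theorem zeroJump_le : TuringLE zeroJump (jump X) := by
  have h : Sig emptyOracle (fun p : ℕ × ℕ => OracleComputes p.1 emptyOracle p.1 p.2) :=
    Sig.oc.comp (f := fun p : ℕ × ℕ => (p.1, p.1, p.2)) (by fun_prop)
  have h1 : Sig X (fun e : ℕ => ∃ m, OracleComputes e emptyOracle e m) := h.ex.of_empty
  rw [turingLE_iff]
  have h2 := (h1.jump.comp (f := fun p : ℕ × Bool => p.1) (by fun_prop)).and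
    (Sig.of_decide (p := fun p : ℕ × Bool => p.2 = true) (by fun_prop))
  have h3 := (h1.not_jump.comp (f := fun p : ℕ × Bool => p.1) (by fun_prop)).and
    (Sig.of_decide (p := fun p : ℕ × Bool => p.2 = false) (by fun_prop))
  refine (h2.or h3).of_eq fun p => ?_
  rcases p with ⟨n, b⟩
  cases b <;> simp [zeroJump, _root_.jump]

theorem zeroJump_not_computable : ¬ ComputableSet zeroJump := by
  intro h
  have h := turingLE_iff.1 h
  have : Sig emptyOracle (fun q : Unit × ℕ × ℕ => zeroJump q.2.1 = false) :=
    h.comp (f := fun q : Unit × ℕ × ℕ => (q.2.1, false)) (by fun_prop)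
  obtain ⟨f, -, hf⟩ := this.index
  have h1 : zeroJump (f ()) = true ↔ ∃ m, OracleComputes (f ()) emptyOracle (f ()) m := by
    simp [zeroJump, _root_.jump]
  simp only [hf] at h1
  cases h2 : zeroJump (f ()) <;> simp [h2] at h1

end Sig
end DM

end

section
namespace DM
section Iter
variable {α β : Type*} [Primcodable α] [Primcodable β] {X : ℕ → Bool}

theorem Sig.val {d : List Bool × α → Bool} (hd : Computable d) :
    Sig X (fun q : (ℕ × α) × Bool => d (strPrefix X q.1.1, q.1.2) = q.2) := by
  have h1 : Sig X (fun q : ((ℕ × α) × Bool) × List Bool => IsPrefixOf q.2 X) :=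
    Sig.pre.comp (by fun_prop)
  have h2 : Sig X (fun q : ((ℕ × α) × Bool) × List Bool => q.2.length = q.1.1.1) :=
    Sig.of_decide (by fun_prop)
  have h3 : Sig X (fun q : ((ℕ × α) × Bool) × List Bool => d (q.2, q.1.1.2) = q.1.2) :=
    Sig.of_decide (by fun_prop)
  refine ((h1.and h2).and h3).ex.of_eq fun q => ?_
  constructor
  · rintro ⟨σ, ⟨h1, h2⟩, h3⟩
    simp only at h1 h2 h3
    rw [← h2, (isPrefixOf_iff' _ _).1 h1]
    exact h3
  · intro h
    exact ⟨strPrefix X q.1.1, ⟨isPrefixOf_strPrefix _ _, length_strPrefix _ _⟩, h⟩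

theorem uniformize {D : α × ℕ → Prop} (h : Sig X D) (tot : ∀ a, ∃ b, D (a, b)) :
    ∃ f : α → ℕ, (∀ a, D (a, f a)) ∧ Sig X (fun p : α × ℕ => f p.1 = p.2) := by
  obtain ⟨d, hd, H⟩ := h
  have ex : ∀ a, ∃ u : ℕ, d (strPrefix X u.unpair.1, (a, u.unpair.2)) = true := by
    intro a
    obtain ⟨b, hb⟩ := tot a
    obtain ⟨t, ht⟩ := (H _).1 hb
    exact ⟨Nat.pair t b, by simpa using ht⟩
  classical
  refine ⟨fun a => (Nat.find (ex a)).unpair.2, fun a => (H _).2 ⟨_, Nat.find_spec (ex a)⟩, ?_⟩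
  have v : Sig X (fun q : (ℕ × α × ℕ) × Bool => d (strPrefix X q.1.1, q.1.2) = q.2) := Sig.val hd
  have h1 : Sig X (fun q : (α × ℕ) × ℕ =>
      d (strPrefix X q.2.unpair.1, (q.1.1, q.2.unpair.2)) = true) :=
    v.comp (f := fun q : (α × ℕ) × ℕ => ((q.2.unpair.1, q.1.1, q.2.unpair.2), true)) (by fun_prop)
  have h2 : Sig X (fun q : ((α × ℕ) × ℕ) × ℕ =>
      d (strPrefix X q.2.unpair.1, (q.1.1.1, q.2.unpair.2)) = false) :=
    v.comp (f := fun q : ((α × ℕ) × ℕ) × ℕ => ((q.2.unpair.1, q.1.1.1, q.2.unpair.2), false))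
      (by fun_prop)
  have h3 : Sig X (fun q : (α × ℕ) × ℕ => q.2.unpair.2 = q.1.2) := Sig.of_decide (by fun_prop)
  have h4 := h2.ball' (f := fun q : (α × ℕ) × ℕ => q.2)
    (p := fun q i => d (strPrefix X i.unpair.1, (q.1.1, i.unpair.2)) = false) (by fun_prop)
  refine ((h1.and h4).and h3).ex.of_eq fun q => ?_
  constructor
  · rintro ⟨u, ⟨h1, h2⟩, h3⟩
    simp only at h1 h2 h3
    have : Nat.find (ex q.1) = u := by
      rw [Nat.find_eq_iff]
      exact ⟨h1, fun n hn => by simp [h2 n hn]⟩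
    show (Nat.find (ex q.1)).unpair.2 = q.2
    rw [this, h3]
  · intro hq
    refine ⟨Nat.find (ex q.1), ⟨Nat.find_spec (ex q.1), fun i hi => ?_⟩, hq⟩
    simpa using Nat.find_min (ex q.1) hi

theorem iter_graph {D : (ℕ × ℕ) × ℕ → Prop} (h : Sig X D)
    (fn : ∀ s c b b', D ((s, c), b) → D ((s, c), b') → b = b') (f : ℕ → ℕ)
    (hf : ∀ s, D ((s, f s), f (s + 1))) : Sig X (fun p : ℕ × ℕ => f p.1 = p.2) := by
  have h1 : Sig X (fun q : (((ℕ × ℕ) × List ℕ) × ℕ) × (ℕ × ℕ) =>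
      (q.1.1.2[q.1.2]? = some q.2.1 ∧ q.1.1.2[q.1.2 + 1]? = some q.2.2) ∧ D ((q.1.2, q.2.1), q.2.2)) :=
    ((Sig.of_decide (by fun_prop)).and (Sig.of_decide (by fun_prop))).and
      (h.comp (f := fun q : (((ℕ × ℕ) × List ℕ) × ℕ) × (ℕ × ℕ) => ((q.1.2, q.2.1), q.2.2))
      (by fun_prop))
  have h2 := h1.ex.ball' (f := fun q : (ℕ × ℕ) × List ℕ => q.1.1)
    (p := fun q i => ∃ b : ℕ × ℕ, (q.2[i]? = some b.1 ∧ q.2[i + 1]? = some b.2) ∧ D ((i, b.1), b.2))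
    (by fun_prop)
  have h3 : Sig X (fun q : (ℕ × ℕ) × List ℕ => q.2[0]? = some (f 0)) := Sig.of_decide (by fun_prop)
  have h4 : Sig X (fun q : (ℕ × ℕ) × List ℕ => q.2[q.1.1]? = some q.1.2) :=
    Sig.of_decide (by fun_prop)
  refine ((h3.and h2).and h4).ex.of_eq fun q => ?_
  obtain ⟨s, c⟩ := q
  constructor
  · rintro ⟨l, ⟨h0, h1⟩, h2⟩
    simp only at h0 h1 h2
    have : ∀ i ≤ s, l[i]? = some (f i) := by
      intro i
      induction i with
      | zero => intro _; exact h0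
      | succ i ih =>
        intro hi
        obtain ⟨⟨a, b⟩, ⟨ha, hb⟩, hD⟩ := h1 i (by omega)
        simp only at ha hb hD
        rw [ih (by omega)] at ha
        simp at ha
        subst ha
        rw [hb, fn _ _ _ _ hD (hf i)]
    rw [this s le_rfl] at h2
    simpa using h2
  · intro hc
    have hc : f s = c := hc
    subst hc
    have key : ∀ i ≤ s, ((List.range (s+1)).map f)[i]? = some (f i) := by
      intro i hi
      simp [List.getElem?_range (show i < s + 1 by omega)]
    refine ⟨(List.range (s+1)).map f, ⟨key 0 (by omega), fun i hi => ⟨(f i, f (i+1)), ⟨key i (by simp at hi; omega), key (i+1) (by simp at hi; omega)⟩, hf i⟩⟩, key s le_rfl⟩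

theorem iterate {D : (ℕ × ℕ) × ℕ → Prop} (h : Sig X D) (tot : ∀ a, ∃ b, D (a, b)) (c0 : ℕ) :
    ∃ f : ℕ → ℕ, f 0 = c0 ∧ (∀ s, D ((s, f s), f (s + 1))) ∧
      Sig X (fun p : ℕ × ℕ => f p.1 = p.2) := by
  obtain ⟨g, hg, hg'⟩ := uniformize h tot
  let f : ℕ → ℕ := fun s => Nat.rec c0 (fun i c => g (i, c)) s
  refine ⟨f, rfl, fun s => hg (s, f s), ?_⟩
  exact iter_graph hg' (fun s c b b' h1 h2 => by simp at h1 h2; rw [← h1, ← h2]) f (fun s => rfl)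

theorem left_le_join (A R : ℕ → Bool) : TuringLE A (joinSet A R) := by
  rw [turingLE_iff]
  refine (Sig.oracle.comp (f := fun p : ℕ × Bool => (2 * p.1, p.2)) (by fun_prop)).of_eq fun p => ?_
  simp [joinSet]

theorem right_le_join (A R : ℕ → Bool) : TuringLE R (joinSet A R) := by
  rw [turingLE_iff]
  refine (Sig.oracle.comp (f := fun p : ℕ × Bool => (2 * p.1 + 1, p.2)) (by fun_prop)).of_eq fun p => ?_
  have h : (2 * p.1 + 1) / 2 = p.1 := by omega
  simp [joinSet, h, Nat.add_mod]

theorem join_le {A R : ℕ → Bool} (h1 : TuringLE A X) (h2 : TuringLE R X) :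
    TuringLE (joinSet A R) X := by
  rw [turingLE_iff] at *
  have a := (Sig.of_decide (X := X) (p := fun p : ℕ × Bool => p.1 % 2 = 0) (by fun_prop)).and
    (h1.comp (f := fun p : ℕ × Bool => (p.1 / 2, p.2)) (by fun_prop))
  have b := (Sig.of_decide (X := X) (p := fun p : ℕ × Bool => p.1 % 2 = 1) (by fun_prop)).and
    (h2.comp (f := fun p : ℕ × Bool => (p.1 / 2, p.2)) (by fun_prop))
  refine (a.or b).of_eq fun p => ?_
  rcases Nat.mod_two_eq_zero_or_one p.1 with h | h <;> simp [joinSet, h]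

end Iter
end DM

end

section
open MeasureTheory ENNReal
namespace DM

theorem measurable_binaryDigits : Measurable binaryDigits := by
  rw [measurable_pi_iff]
  intro n
  have h1 : Measurable (fun x : ℝ => ⌊x * 2 ^ (n + 1)⌋) := by fun_prop
  have h2 : Measurable (fun z : ℤ => decide (z % 2 = 1)) := measurable_from_top
  exact h2.comp h1

theorem digits_iff (τ : List Bool) : ∃ v : ℤ, 0 ≤ v ∧ v < 2 ^ τ.length ∧ ∀ x : ℝ, 0 ≤ x → x < 1 →
    (IsPrefixOf τ (binaryDigits x) ↔ ⌊x * 2 ^ τ.length⌋ = v) := by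
  induction τ using List.reverseRecOn with
  | nil =>
    refine ⟨0, le_rfl, by simp, fun x h0 h1 => ?_⟩
    simp only [List.length_nil, pow_zero, mul_one]
    constructor
    · intro _
      rw [Int.floor_eq_zero_iff]
      exact ⟨h0, h1⟩
    · intro _ i
      exact i.elim0
  | append_singleton τ b ih =>
    obtain ⟨v, hv0, hv1, H⟩ := ih
    refine ⟨2 * v + (if b then 1 else 0), by split_ifs <;> omega, ?_, fun x h0 h1 => ?_⟩
    · simp only [List.length_append, List.length_singleton, pow_succ]
      split_ifs <;> omega
    · have key : IsPrefixOf (τ ++ [b]) (binaryDigits x) ↔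
          IsPrefixOf τ (binaryDigits x) ∧ binaryDigits x τ.length = b := by
        rw [isPrefixOf_iff, isPrefixOf_iff]
        constructor
        · intro h
          refine ⟨fun i hi => ?_, ?_⟩
          · have := h i (by simp; omega)
            rwa [List.getElem?_append_left hi] at this
          · have := h τ.length (by simp)
            simpa using this.symm
        · rintro ⟨h1, h2⟩ i hi
          simp at hi
          rcases Nat.lt_or_ge i τ.length with h | h
          · rw [List.getElem?_append_left h]
            exact h1 i h
          · obtain rfl : i = τ.length := by omega
            simp [h2]
      rw [key, H x h0 h1]
      have e1 : ⌊x * 2 ^ τ.length⌋ = ⌊x * 2 ^ (τ.length + 1)⌋ / 2 := by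
        have : x * 2 ^ τ.length = (x * 2 ^ (τ.length + 1)) / (2 : ℕ) := by
          rw [pow_succ]; push_cast; ring
        rw [this, Int.floor_div_natCast]
        rfl
      simp only [binaryDigits, List.length_append, List.length_singleton, e1]
      cases b <;> simp <;> omega

theorem measurableSet_cylinder (τ : List Bool) : MeasurableSet (cylinder τ) := by
  have : cylinder τ = ⋂ i : Fin τ.length, (fun Z : ℕ → Bool => Z i) ⁻¹' {τ.get i} := by
    ext Z
    simp [_root_.cylinder, IsPrefixOf]
  rw [this]
  exact MeasurableSet.iInter fun i => measurable_pi_apply _ (measurableSet_singleton _)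

theorem mu_cylinder (τ : List Bool) : μCantor (cylinder τ) = 2⁻¹ ^ τ.length := by
  obtain ⟨v, h0, h1, H⟩ := digits_iff τ
  have hp : (0:ℝ) < 2 ^ τ.length := by positivity
  rw [μCantor, Measure.map_apply measurable_binaryDigits (measurableSet_cylinder τ),
    Measure.restrict_apply (measurable_binaryDigits (measurableSet_cylinder τ))]
  have : binaryDigits ⁻¹' cylinder τ ∩ Set.Ico 0 1 =
      Set.Ico ((v:ℝ) / 2 ^ τ.length) ((v + 1) / 2 ^ τ.length) := by
    ext x
    simp only [Set.mem_inter_iff, Set.mem_preimage, Set.mem_Ico, div_le_iff₀ hp, lt_div_iff₀ hp]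
    have a0 : (0:ℝ) ≤ v := by exact_mod_cast h0
    have a1 : (v:ℝ) + 1 ≤ 2 ^ τ.length := by exact_mod_cast h1
    constructor
    · rintro ⟨h, hx0, hx1⟩
      exact Int.floor_eq_iff.1 ((H x hx0 hx1).1 h)
    · rintro ⟨h2, h3⟩
      have hx0 : 0 ≤ x := by
        by_contra hx
        have : x * 2 ^ τ.length < 0 := mul_neg_of_neg_of_pos (not_le.1 hx) hp
        linarith
      have hx1 : x < 1 := by
        by_contra hx
        have : 1 * 2 ^ τ.length ≤ x * 2 ^ τ.length :=
          mul_le_mul_of_nonneg_right (not_lt.1 hx) hp.le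
        linarith
      exact ⟨(H x hx0 hx1).2 (Int.floor_eq_iff.2 ⟨h2, h3⟩), hx0, hx1⟩
  rw [this, Real.volume_Ico, ← sub_div]
  simp only [add_sub_cancel_left]
  rw [one_div, ENNReal.ofReal_inv_of_pos hp, ENNReal.ofReal_pow (by norm_num)]
  simp [ENNReal.inv_pow]

instance : IsProbabilityMeasure μCantor := by
  constructor
  have := mu_cylinder []
  have h : cylinder [] = Set.univ := by
    ext Z; simp [_root_.cylinder, IsPrefixOf]
  simpa [h] using this

/-- the fair coin -/
noncomputable def coin : Measure Bool := (2⁻¹ : ℝ≥0∞) • Measure.count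

instance : IsProbabilityMeasure coin := by
  constructor
  simp only [coin, Measure.smul_apply, Measure.count_univ, smul_eq_mul]
  simp only [ENat.card_eq_coe_fintype_card, Fintype.card_bool]
  exact ENNReal.inv_mul_cancel two_ne_zero ENNReal.ofNat_ne_top

theorem coin_singleton (b : Bool) : coin {b} = 2⁻¹ := by
  simp [coin]

theorem cylinder_pi (τ : List Bool) :
    cylinder τ = Set.pi (Finset.range τ.length) (fun i => {(τ[i]?).getD true}) := by
  ext Z
  simp only [_root_.cylinder, Set.mem_ofPred_eq, isPrefixOf_iff, Set.mem_pi, Finset.coe_range, Set.mem_Iio,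
    Set.mem_singleton_iff]
  refine forall₂_congr fun i hi => ?_
  simp [hi]
  exact eq_comm

theorem cylinder_inter (σ τ : List Bool) :
    cylinder σ ∩ cylinder τ = cylinder σ ∨ cylinder σ ∩ cylinder τ = cylinder τ ∨
      cylinder σ ∩ cylinder τ = ∅ := by
  have key : ∀ σ τ : List Bool, σ.length ≤ τ.length → cylinder σ ∩ cylinder τ = cylinder τ ∨
      cylinder σ ∩ cylinder τ = ∅ := by
    intro σ τ h
    by_cases h2 : τ.take σ.length = σ
    · left
      rw [Set.inter_eq_right]
      intro Z hZ
      have hZ : IsPrefixOf τ Z := hZ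
      show IsPrefixOf σ Z
      rw [isPrefixOf_iff'] at hZ ⊢
      rw [← take_strPrefix Z _ _ h, hZ, h2]
    · right
      ext Z
      simp only [Set.mem_inter_iff, Set.mem_empty_iff_false, iff_false, not_and]
      intro h3 h4
      have h3 : IsPrefixOf σ Z := h3
      have h4 : IsPrefixOf τ Z := h4
      rw [isPrefixOf_iff'] at h3 h4
      apply h2
      rw [← h4, take_strPrefix Z _ _ h, h3]
  rcases le_total σ.length τ.length with h | h
  · exact Or.inr (key σ τ h)
  · rw [Set.inter_comm]
    rcases key τ σ h with h | h
    · exact Or.inl h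
    · exact Or.inr (Or.inr h)

theorem coord_eq (n : ℕ) (t : Set Bool) : (fun Z : ℕ → Bool => Z n) ⁻¹' t =
    ⋃ σ : {σ : List Bool // σ.length = n + 1 ∧ ∃ b ∈ t, σ[n]? = some b}, cylinder σ.1 := by
  ext Z
  simp only [Set.mem_preimage, Set.mem_iUnion, Subtype.exists]
  constructor
  · intro h
    exact ⟨strPrefix Z (n+1), ⟨length_strPrefix _ _, Z n, h, by simp [getElem?_strPrefix]⟩,
      isPrefixOf_strPrefix _ _⟩
  · rintro ⟨σ, ⟨h1, b, hb, h2⟩, h3⟩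
    have h3 : IsPrefixOf σ Z := h3
    have := (isPrefixOf_iff _ _).1 h3 n (by omega)
    rw [h2] at this
    simp at this
    rwa [← this]

theorem mu_eq : μCantor = Measure.infinitePi (fun _ : ℕ => coin) := by
  refine ext_of_generate_finite (Set.range cylinder ∪ {∅}) ?_ ?_ ?_ (by simp)
  · apply le_antisymm
    · refine iSup_le fun n => ?_
      rintro _ ⟨t, -, rfl⟩
      rw [coord_eq]
      exact MeasurableSet.iUnion fun σ => MeasurableSpace.measurableSet_generateFrom
        (Or.inl ⟨_, rfl⟩)
    · apply MeasurableSpace.generateFrom_le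
      rintro _ (⟨σ, rfl⟩ | rfl)
      · exact measurableSet_cylinder σ
      · exact MeasurableSet.empty
  · rintro _ (⟨σ, rfl⟩ | rfl) _ (⟨τ, rfl⟩ | rfl) hne
    · rcases cylinder_inter σ τ with h | h | h <;> rw [h]
      · exact Or.inl ⟨_, rfl⟩
      · exact Or.inl ⟨_, rfl⟩
      · exact Or.inr rfl
    all_goals simp at hne
  · rintro _ (⟨σ, rfl⟩ | rfl)
    · rw [mu_cylinder, cylinder_pi, Measure.infinitePi_pi]
      · simp [coin_singleton]
      · intro i _; exact measurableSet_singleton _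
    · simp

/-- real valued measure -/
noncomputable abbrev m (S : Set (ℕ → Bool)) : ℝ := μCantor.real S

/-- all ones on `F` -/
def ones (F : Finset ℕ) : Set (ℕ → Bool) := {Z | ∀ i ∈ F, Z i = true}

theorem ones_pi (F : Finset ℕ) : ones F = Set.pi F (fun _ => {true}) := by
  ext Z; simp [ones]

theorem measurableSet_ones (F : Finset ℕ) : MeasurableSet (ones F) := by
  rw [ones_pi]
  exact MeasurableSet.pi F.countable_toSet fun _ _ => measurableSet_singleton _

theorem m_ones (F : Finset ℕ) : m (ones F) = 2⁻¹ ^ F.card := by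
  rw [m, measureReal_def, mu_eq, ones_pi, Measure.infinitePi_pi]
  · simp [coin_singleton]
  · intro i _; exact measurableSet_singleton _

theorem m_cylinder (τ : List Bool) : m (cylinder τ) = 2⁻¹ ^ τ.length := by
  rw [m, measureReal_def, mu_cylinder]
  simp

theorem measurableSet_openOf (S : Set (List Bool)) : MeasurableSet (openOf S) :=
  MeasurableSet.biUnion (Set.to_countable S) fun σ _ => measurableSet_cylinder σ

theorem mem_openOf {S : Set (List Bool)} {Z : ℕ → Bool} :
    Z ∈ openOf S ↔ ∃ t, strPrefix Z t ∈ S := by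
  simp only [openOf, Set.mem_iUnion, _root_.cylinder, Set.mem_ofPred_eq, exists_prop]
  constructor
  · rintro ⟨σ, h1, h2⟩
    exact ⟨σ.length, by rwa [(isPrefixOf_iff' _ _).1 h2]⟩
  · rintro ⟨t, h⟩
    exact ⟨_, h, isPrefixOf_strPrefix _ _⟩

theorem disj_cyl {σ τ : List Bool} (h : σ.length = τ.length) (hne : σ ≠ τ) :
    Disjoint (cylinder σ) (cylinder τ) := by
  rw [Set.disjoint_left]
  intro Z h1 h2
  have h1 : IsPrefixOf σ Z := h1
  have h2 : IsPrefixOf τ Z := h2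
  rw [isPrefixOf_iff'] at h1 h2
  exact hne (by rw [← h1, ← h2, h])

theorem m_level (D : Finset (List Bool)) (L : ℕ) (h : ∀ ρ ∈ D, ρ.length = L) :
    m (⋃ ρ ∈ D, cylinder ρ) = D.card * 2⁻¹ ^ L := by
  rw [m, measureReal_biUnion_finset]
  · rw [Finset.sum_congr rfl (fun ρ hρ => by rw [← m, m_cylinder, h ρ hρ])]
    simp
  · intro σ hσ τ hτ hne
    exact disj_cyl ((h σ hσ).trans (h τ hτ).symm) hne
  · intro σ _
    exact measurableSet_cylinder σ

/-- level approximation -/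
theorem level_approx (S : Set (List Bool)) {c : ℝ} (hc : c < m (openOf S)) :
    ∃ L : ℕ, ∃ D : Finset (List Bool), (∀ ρ ∈ D, ρ.length = L ∧ ∃ i < L + 1, ρ.take i ∈ S) ∧
      c < D.card * 2⁻¹ ^ L := by
  classical
  let W : ℕ → Set (ℕ → Bool) := fun L => {Z | ∃ i < L + 1, strPrefix Z i ∈ S}
  have hW : openOf S = ⋃ L, W L := by
    ext Z
    rw [mem_openOf, Set.mem_iUnion]
    exact ⟨fun ⟨t, ht⟩ => ⟨t, t, by omega, ht⟩, fun ⟨L, i, _, h⟩ => ⟨i, h⟩⟩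
  have hmono : Monotone W := fun a b hab Z ⟨i, hi, h⟩ => ⟨i, by omega, h⟩
  have ht := tendsto_measure_iUnion_atTop (μ := μCantor) hmono
  rw [← hW] at ht
  have ht2 : Filter.Tendsto (fun L => m (W L)) Filter.atTop (nhds (m (openOf S))) :=
    (ENNReal.tendsto_toReal (measure_ne_top _ _)).comp ht
  obtain ⟨L, hL⟩ := (ht2.eventually (lt_mem_nhds hc)).exists
  have fin : {ρ : List Bool | ρ.length = L ∧ ∃ i < L + 1, ρ.take i ∈ S}.Finite :=
    (List.finite_length_eq Bool L).subset fun ρ h => h.1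
  refine ⟨L, fin.toFinset, fun ρ hρ => by simpa using hρ, ?_⟩
  rw [← m_level _ L (fun ρ hρ => by simp at hρ; exact hρ.1)]
  refine lt_of_lt_of_le hL (measureReal_mono ?_ (measure_ne_top _ _))
  rintro Z ⟨i, hi, h⟩
  simp only [Set.mem_iUnion, Set.Finite.mem_toFinset]
  exact ⟨strPrefix Z L, ⟨length_strPrefix _ _, i, hi, by rwa [take_strPrefix _ _ _ (by omega)]⟩,
    isPrefixOf_strPrefix _ _⟩

theorem level_le (S : Set (List Bool)) (L : ℕ) (D : Finset (List Bool))
    (h : ∀ ρ ∈ D, ρ.length = L ∧ ∃ i, ρ.take i ∈ S) : D.card * 2⁻¹ ^ L ≤ m (openOf S) := by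
  rw [← m_level D L (fun ρ hρ => (h ρ hρ).1)]
  refine measureReal_mono ?_
  intro Z hZ
  simp only [Set.mem_iUnion] at hZ
  obtain ⟨ρ, hρ, hZ⟩ := hZ
  obtain ⟨h1, i, hi⟩ := h ρ hρ
  rw [mem_openOf]
  have hZ : IsPrefixOf ρ Z := hZ
  rw [isPrefixOf_iff'] at hZ
  rcases le_total i ρ.length with h | h
  · exact ⟨i, by rwa [← hZ, take_strPrefix _ _ _ h] at hi⟩
  · exact ⟨ρ.length, by rw [hZ]; rwa [List.take_of_length_le h] at hi⟩

theorem Sig.threshold {α : Type*} [Primcodable α] {X : ℕ → Bool} {T : α × List Bool → Prop}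
    (h : Sig X T) : Sig X (fun p : α × ℕ × ℕ => (p.2.1 : ℝ) < m (openOf {σ | T (p.1, σ)}) * 2 ^ p.2.2) := by
  -- parameters (p, D, L)
  have h1 : Sig X (fun q : ((((α × ℕ × ℕ) × List (List Bool) × ℕ) × ℕ) × List Bool) × ℕ =>
      T (q.1.1.1.1.1, q.1.2.take q.2)) :=
    h.comp (f := fun q : ((((α × ℕ × ℕ) × List (List Bool) × ℕ) × ℕ) × List Bool) × ℕ =>
      (q.1.1.1.1.1, q.1.2.take q.2)) (by fun_prop)
  have h2 : Sig X (fun q : (((α × ℕ × ℕ) × List (List Bool) × ℕ) × ℕ) × List Bool =>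
      (q.1.1.2.1[q.1.2]? = some q.2 ∧ q.2.length = q.1.1.2.2) ∧ ∃ i : ℕ,
        T (q.1.1.1.1, q.2.take i)) :=
    ((Sig.of_decide (by fun_prop)).and (Sig.of_decide (by fun_prop))).and h1.ex
  have h3 := h2.ex.ball' (f := fun q : (α × ℕ × ℕ) × List (List Bool) × ℕ => q.2.1.length)
    (p := fun q i => ∃ ρ, (q.2.1[i]? = some ρ ∧ ρ.length = q.2.2) ∧ ∃ i : ℕ, T (q.1.1, ρ.take i))
    (by fun_prop)
  have h4 : Sig X (fun q : ((α × ℕ × ℕ) × List (List Bool) × ℕ) => ∀ j < q.2.1.length,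
      ∀ i < j, q.2.1[i]? ≠ q.2.1[j]?) := by
    refine Sig.ball' (by fun_prop) ?_
    refine Sig.ball' (f := fun q : ((α × ℕ × ℕ) × List (List Bool) × ℕ) × ℕ => q.2) (by fun_prop) ?_
    refine Sig.of_decide ?_
    simp only [ne_eq, decide_not]
    fun_prop
  have h5 : Sig X (fun q : ((α × ℕ × ℕ) × List (List Bool) × ℕ) =>
      q.1.2.1 * 2 ^ q.2.2 < q.2.1.length * 2 ^ q.1.2.2) := by
    apply Sig.of_decide
    apply c_lt
    · apply c_mul (by fun_prop)
      exact c_pow (c_const 2) (by fun_prop)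
    · apply c_mul (by fun_prop)
      exact c_pow (c_const 2) (by fun_prop)
  refine ((h3.and h4).and h5).ex.of_eq fun p => ?_
  obtain ⟨a, c, q⟩ := p
  have hq : (0:ℝ) < 2 ^ q := by positivity
  constructor
  · rintro ⟨⟨D, L⟩, ⟨h3, h4⟩, h5⟩
    simp only at h3 h4 h5 ⊢
    have nd : D.Nodup := by
      rw [List.nodup_iff_getElem?_ne_getElem?]
      intro i j hij hj
      exact h4 j hj i hij
    have hL : (0:ℝ) < 2 ^ L := by positivity
    have := level_le {σ | T (a, σ)} L D.toFinset (fun ρ hρ => by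
      rw [List.mem_toFinset] at hρ
      obtain ⟨i, hi, rfl⟩ := List.mem_iff_getElem.1 hρ
      obtain ⟨ρ', ⟨h6, h7⟩, h8⟩ := h3 i hi
      simp [hi] at h6
      subst h6
      exact ⟨h7, h8⟩)
    rw [List.toFinset_card_of_nodup nd] at this
    have h6 : (c:ℝ) * 2 ^ L < D.length * 2 ^ q := by exact_mod_cast h5
    have h7 : (c:ℝ) < D.length * 2⁻¹ ^ L * 2 ^ q := by
      rw [inv_pow, mul_assoc, mul_comm, mul_assoc, mul_comm _ (D.length : ℝ), ← div_eq_inv_mul, lt_div_iff₀ hL]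
      exact h6
    exact lt_of_lt_of_le h7 (mul_le_mul_of_nonneg_right this hq.le)
  · intro h
    simp only at h
    obtain ⟨L, D, hD, h1⟩ := level_approx {σ | T (a, σ)} (c := c / 2 ^ q) (by rwa [div_lt_iff₀ hq])
    have hL : (0:ℝ) < 2 ^ L := by positivity
    refine ⟨(D.toList, L), ⟨fun i hi => ?_, ?_⟩, ?_⟩
    · have hi : i < D.toList.length := hi
      have hm : D.toList[i] ∈ D := by
        rw [← Finset.mem_toList]; exact List.getElem_mem hi
      obtain ⟨h2, j, -, h3⟩ := hD _ hm
      exact ⟨D.toList[i], ⟨by simp, h2⟩, j, h3⟩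
    · intro j hj i hij
      exact List.nodup_iff_getElem?_ne_getElem?.1 D.nodup_toList i j hij hj
    · simp only [Finset.length_toList]
      have : (c:ℝ) * 2 ^ L < D.card * 2 ^ q := by
        rw [div_lt_iff₀ hq, inv_pow, mul_assoc, mul_comm (2 ^ L)⁻¹, ← mul_assoc, ← div_eq_mul_inv,
          lt_div_iff₀ hL] at h1
        exact h1
      exact_mod_cast this

/-- density: some cylinder is more than half full -/
theorem density {Q : Set (ℕ → Bool)} (hQ : 0 < m Q) :
    ∃ τ : List Bool, 2⁻¹ ^ τ.length < 2 * m (Q ∩ cylinder τ) := by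
  classical
  by_contra hcon
  push Not at hcon
  have hQ' : μCantor Q ≠ 0 := by
    intro h; simp [m, measureReal_def, h] at hQ
  obtain ⟨U, hQU, hU, hlt⟩ := Q.exists_isOpen_lt_of_lt (μ := μCantor) (2 * μCantor Q) (by
    rw [two_mul]; exact ENNReal.lt_add_right (measure_ne_top _ _) hQ')
  have hlt : m U < 2 * m Q := by
    have := (ENNReal.toReal_lt_toReal (measure_ne_top _ _) (by finiteness)).2 hlt
    simpa [m, measureReal_def] using this
  let S : Set (List Bool) := {σ | cylinder σ ⊆ U}
  have hS : openOf S = U := by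
    apply Set.Subset.antisymm
    · exact Set.iUnion₂_subset fun σ h => h
    · intro Z hZ
      rw [mem_openOf]
      obtain ⟨I, u, h1, h2⟩ := isOpen_pi_iff.1 hU Z hZ
      refine ⟨I.sup id + 1, ?_⟩
      intro Y hY
      apply h2
      intro i hi
      have hY : IsPrefixOf _ Y := hY
      rw [isPrefixOf_iff', length_strPrefix] at hY
      have hi' : i ≤ I.sup id := Finset.le_sup (f := id) hi
      have := congrArg (fun l => l[i]?) hY
      simp only [getElem?_strPrefix] at this
      rw [if_pos (by omega), if_pos (by omega)] at this
      simp at this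
      rw [this]
      exact (h1 i hi).2
  let W : ℕ → Set (ℕ → Bool) := fun L => {Z | ∃ i < L + 1, strPrefix Z i ∈ S}
  have hW : openOf S = ⋃ L, W L := by
    ext Z
    rw [mem_openOf, Set.mem_iUnion]
    exact ⟨fun ⟨t, ht⟩ => ⟨t, t, by omega, ht⟩, fun ⟨L, i, _, h⟩ => ⟨i, h⟩⟩
  have hmono : Monotone W := fun a b hab Z ⟨i, hi, h⟩ => ⟨i, by omega, h⟩
  have hmono2 : Monotone (fun L => Q ∩ W L) := fun a b hab => Set.inter_subset_inter_right _ (hmono hab)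
  have ht := tendsto_measure_iUnion_atTop (μ := μCantor) hmono2
  rw [← Set.inter_iUnion, ← hW, hS, Set.inter_eq_left.2 hQU] at ht
  have ht2 : Filter.Tendsto (fun L => m (Q ∩ W L)) Filter.atTop (nhds (m Q)) :=
    (ENNReal.tendsto_toReal (measure_ne_top _ _)).comp ht
  obtain ⟨L, hL⟩ := (ht2.eventually (lt_mem_nhds (show m U / 2 < m Q by linarith))).exists
  have fin : {ρ : List Bool | ρ.length = L ∧ ∃ i < L + 1, ρ.take i ∈ S}.Finite :=
    (List.finite_length_eq Bool L).subset fun ρ h => h.1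
  have hD : ∀ ρ ∈ fin.toFinset, ρ.length = L ∧ ∃ i < L + 1, ρ.take i ∈ S := fun ρ hρ => by
    simpa using hρ
  have a1 := level_le S L fin.toFinset (fun ρ hρ => ⟨(hD ρ hρ).1, by
    obtain ⟨i, _, h⟩ := (hD ρ hρ).2; exact ⟨i, h⟩⟩)
  rw [hS] at a1
  have a2 : m (Q ∩ W L) ≤ ∑ ρ ∈ fin.toFinset, m (Q ∩ cylinder ρ) := by
    refine le_trans (measureReal_mono ?_ (measure_ne_top _ _)) (measureReal_biUnion_finset_le _ _)
    rintro Z ⟨hZQ, i, hi, h⟩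
    simp only [Set.mem_iUnion, Set.Finite.mem_toFinset]
    exact ⟨strPrefix Z L, ⟨length_strPrefix _ _, i, hi, by rwa [take_strPrefix _ _ _ (by omega)]⟩,
      hZQ, isPrefixOf_strPrefix _ _⟩
  have a3 : ∑ ρ ∈ fin.toFinset, m (Q ∩ cylinder ρ) ≤ ∑ ρ ∈ fin.toFinset, (2⁻¹:ℝ) ^ L / 2 := by
    refine Finset.sum_le_sum fun ρ hρ => ?_
    have := hcon ρ
    rw [(hD ρ hρ).1] at this
    linarith
  simp only [Finset.sum_const, nsmul_eq_mul] at a3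
  linarith

end DM

end

section
open MeasureTheory ENNReal
namespace DM
open Nat.Partrec (Code)

@[fun_prop] theorem c_two_pow {α : Type*} [Primcodable α] {g : α → ℕ} (hg : Computable g) :
    Computable (fun x => 2 ^ g x) := c_pow (c_const 2) hg

/-- binary value, most significant digit first -/
def val (σ : List Bool) : ℕ := σ.foldl (fun v b => 2 * v + natOfBool b) 0

@[fun_prop] theorem c_val {α : Type*} [Primcodable α] {g : α → List Bool} (hg : Computable g) :
    Computable (fun x => val (g x)) := by
  have h : Primrec natOfBool := Primrec.dom_bool _
  have : Primrec val := by
    refine Primrec.list_foldl (f := fun l : List Bool => l) (g := fun _ => 0)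
      (h := fun _ q => 2 * q.1 + natOfBool q.2) Primrec.id (Primrec.const 0) ?_
    refine Primrec.nat_add.comp (Primrec.nat_mul.comp (Primrec.const 2) ?_) (h.comp ?_)
    · exact Primrec.fst.comp Primrec.snd
    · exact Primrec.snd.comp Primrec.snd
  exact this.to_comp.comp hg

theorem val_snoc (σ : List Bool) (b : Bool) : val (σ ++ [b]) = 2 * val σ + natOfBool b := by
  simp [val]

theorem natOfBool_le (b : Bool) : natOfBool b ≤ 1 := by cases b <;> simp [natOfBool]

theorem val_append (σ ρ : List Bool) : val σ * 2 ^ ρ.length ≤ val (σ ++ ρ) ∧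
    val (σ ++ ρ) + 1 ≤ (val σ + 1) * 2 ^ ρ.length := by
  induction ρ using List.reverseRecOn with
  | nil => simp
  | append_singleton ρ b ih =>
    rw [← List.append_assoc, val_snoc]
    have := natOfBool_le b
    simp only [List.length_append, List.length_singleton, pow_succ, ← mul_assoc]
    omega

theorem exists_val (l v : ℕ) (h : v < 2 ^ l) : ∃ σ : List Bool, σ.length = l ∧ val σ = v := by
  induction l generalizing v with
  | zero => exact ⟨[], rfl, by simp at h; simp [h, val]⟩
  | succ l ih =>
    obtain ⟨σ, h1, h2⟩ := ih (v / 2) (by rw [pow_succ] at h; omega)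
    refine ⟨σ ++ [decide (v % 2 = 1)], by simp [h1], ?_⟩
    rw [val_snoc, h2]
    rcases Nat.mod_two_eq_zero_or_one v with h | h <;> simp [h, natOfBool] <;> omega

theorem val_inj {σ τ : List Bool} (h : σ.length = τ.length) (hv : val σ = val τ) : σ = τ := by
  induction σ using List.reverseRecOn generalizing τ with
  | nil => simp at h; exact (List.length_eq_zero_iff.1 h.symm).symm
  | append_singleton σ b ih =>
    induction τ using List.reverseRecOn with
    | nil => simp at h
    | append_singleton τ c _ =>
      rw [val_snoc, val_snoc] at hv
      have hb : b = c := by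
        cases b <;> cases c <;> simp [natOfBool] at hv ⊢ <;> omega
      subst hb
      rw [ih (by simpa using h) (by omega)]

section KC
variable (req : ℕ → Bool) (w : ℕ → ℕ)

/-- numerators and exponents of the partial sums -/
def acc : ℕ → ℕ × ℕ
  | 0 => (0, 0)
  | i + 1 => bif req i then ((acc i).1 * 2 ^ w i + 2 ^ (acc i).2, (acc i).2 + w i) else acc i

/-- partial sums -/
noncomputable def ps (i : ℕ) : ℝ := (acc req w i).1 / 2 ^ (acc req w i).2

theorem ps_succ (i : ℕ) : ps req w (i + 1) = ps req w i + if req i then (2⁻¹ : ℝ) ^ w i else 0 := by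
  unfold ps
  cases h : req i
  · simp [acc, h]
  · simp only [acc, h, cond_true, if_true]
    push_cast
    rw [pow_add, inv_pow]
    field_simp

theorem ps_eq (i : ℕ) : ps req w i = ∑ j ∈ (Finset.range i).filter (fun j => req j = true), (2⁻¹ : ℝ) ^ w j := by
  rw [Finset.sum_filter]
  induction i with
  | zero => simp [ps, acc]
  | succ i ih => rw [ps_succ, ih, Finset.sum_range_succ]

theorem ps_mono : Monotone (ps req w) := by
  refine monotone_nat_of_le_succ fun i => ?_
  rw [ps_succ]
  split_ifs
  · have : (0:ℝ) < 2⁻¹ ^ w i := by positivity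
    linarith
  · simp

theorem c_acc (hr : Computable req) (hw : Computable w) : Computable (acc req w) := by
  have : Computable (fun i => (Nat.rec (0, 0) (fun i p =>
      bif req i then (p.1 * 2 ^ w i + 2 ^ p.2, p.2 + w i) else p) i : ℕ × ℕ)) := by
    refine Computable.nat_rec (f := fun i : ℕ => i) (g := fun _ => ((0, 0) : ℕ × ℕ))
      (h := fun _ q => bif req q.1 then (q.2.1 * 2 ^ w q.1 + 2 ^ q.2.2, q.2.2 + w q.1) else q.2)
      c_id (c_const _) ?_
    show Computable (fun r : ℕ × (ℕ × (ℕ × ℕ)) => bif req r.2.1 then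
      (r.2.2.1 * 2 ^ w r.2.1 + 2 ^ r.2.2.2, r.2.2.2 + w r.2.1) else r.2.2)
    fun_prop
  refine this.of_eq fun i => ?_
  induction i with
  | zero => rfl
  | succ i ih => simp only [acc, ← ih]

/-- `σ` is the string assigned to request `i` -/
def asg (σ : List Bool) (i : ℕ) : Bool :=
  (req i && decide (σ.length = w i + 1)) &&
    (decide ((acc req w i).1 * 2 ^ σ.length ≤ val σ * 2 ^ (acc req w i).2) &&
    decide (val σ * 2 ^ (acc req w i).2 < (acc req w i).1 * 2 ^ σ.length + 2 ^ (acc req w i).2))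

theorem asg_iff (σ : List Bool) (i : ℕ) : asg req w σ i = true ↔ req i = true ∧ σ.length = w i + 1 ∧
    ps req w i ≤ val σ / 2 ^ σ.length ∧ (val σ : ℝ) / 2 ^ σ.length < ps req w i + 2⁻¹ ^ σ.length := by
  simp only [asg, Bool.and_eq_true, decide_eq_true_eq, ps, and_assoc]
  refine and_congr_right fun _ => and_congr_right fun _ => and_congr ?_ ?_
  · rw [div_le_div_iff₀ (by positivity) (by positivity)]
    exact_mod_cast Iff.rfl
  · have : ((acc req w i).1 : ℝ) / 2 ^ (acc req w i).2 + 2⁻¹ ^ σ.length =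
      ((acc req w i).1 * 2 ^ σ.length + 2 ^ (acc req w i).2) / (2 ^ (acc req w i).2 * 2 ^ σ.length) := by
      rw [inv_pow]; field_simp
    rw [this, div_lt_div_iff₀ (by positivity) (by positivity), ← mul_assoc, mul_lt_mul_iff_left₀ (by positivity)]
    exact_mod_cast Iff.rfl

theorem c_asg (hr : Computable req) (hw : Computable w) :
    Computable (fun p : List Bool × ℕ => asg req w p.1 p.2) := by
  have := c_acc req w hr hw
  have a1 : Computable (fun p : List Bool × ℕ => (acc req w p.2).1) := by fun_prop
  have a2 : Computable (fun p : List Bool × ℕ => 2 ^ (acc req w p.2).2) := by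
    apply c_two_pow; fun_prop
  have a3 : Computable (fun p : List Bool × ℕ => 2 ^ p.1.length) := by
    apply c_two_pow; fun_prop
  have a4 : Computable (fun p : List Bool × ℕ => val p.1) := by fun_prop
  exact c_and (c_and (by fun_prop) (by fun_prop)) (c_and (c_le (c_mul a1 a3) (c_mul a4 a2))
    (c_lt (c_mul a4 a2) (c_add (c_mul a1 a3) a2)))

theorem asg_upper {σ : List Bool} {i : ℕ} (h : asg req w σ i = true) :
    ((val σ : ℝ) + 1) / 2 ^ σ.length ≤ ps req w (i + 1) := by
  rw [asg_iff] at h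
  obtain ⟨h1, h2, h3, h4⟩ := h
  rw [ps_succ, if_pos h1, add_div, one_div, ← inv_pow]
  have : (2⁻¹:ℝ) ^ w i = 2⁻¹ ^ σ.length + 2⁻¹ ^ σ.length := by rw [h2, pow_succ]; ring
  linarith

theorem asg_prefix {σ τ : List Bool} {i j : ℕ} (h1 : asg req w σ i = true)
    (h2 : asg req w τ j = true) (h : σ <+: τ) : i = j ∧ σ = τ := by
  have u1 := asg_upper req w h1
  have u2 := asg_upper req w h2
  have a1 := (asg_iff req w σ i).1 h1
  have a2 := (asg_iff req w τ j).1 h2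
  obtain ⟨ρ, rfl⟩ := h
  obtain ⟨v1, v2⟩ := val_append σ ρ
  have v1 : (val σ : ℝ) * 2 ^ ρ.length ≤ val (σ ++ ρ) := by exact_mod_cast v1
  have v2 : (val (σ ++ ρ) : ℝ) + 1 ≤ (val σ + 1) * 2 ^ ρ.length := by exact_mod_cast v2
  have w1 : (val σ : ℝ) / 2 ^ σ.length ≤ val (σ ++ ρ) / 2 ^ (σ ++ ρ).length := by
    rw [List.length_append, pow_add, div_le_div_iff₀ (by positivity) (by positivity)]
    have := mul_le_mul_of_nonneg_right v1 (show (0:ℝ) ≤ 2 ^ σ.length by positivity)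
    linarith
  have w2 : ((val (σ ++ ρ) : ℝ) + 1) / 2 ^ (σ ++ ρ).length ≤ (val σ + 1) / 2 ^ σ.length := by
    rw [List.length_append, pow_add, div_le_div_iff₀ (by positivity) (by positivity)]
    have := mul_le_mul_of_nonneg_right v2 (show (0:ℝ) ≤ 2 ^ σ.length by positivity)
    linarith
  have w3 : (val (σ ++ ρ) : ℝ) / 2 ^ (σ ++ ρ).length < ((val (σ ++ ρ) : ℝ) + 1) / 2 ^ (σ ++ ρ).length := by
    apply div_lt_div_of_pos_right _ (by positivity)
    linarith
  have hij : i = j := by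
    rcases Nat.lt_trichotomy i j with h | h | h
    · have := ps_mono req w (show i + 1 ≤ j by omega)
      linarith [a2.2.2.1]
    · exact h
    · have := ps_mono req w (show j + 1 ≤ i by omega)
      linarith [a1.2.2.1]
  refine ⟨hij, ?_⟩
  subst hij
  have := a1.2.1.trans a2.2.1.symm
  simp at this
  simp [this]

theorem asg_exists {i : ℕ} (h : req i = true) (hb : ps req w (i + 1) ≤ 1) :
    ∃ σ : List Bool, asg req w σ i = true := by
  set l := w i + 1 with hl
  have h0 : 0 ≤ ps req w i := by
    have := ps_mono req w (Nat.zero_le i)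
    simpa [ps, acc] using this
  have hp : (0:ℝ) < 2 ^ l := by positivity
  have c1 : ps req w i * 2 ^ l ≤ ⌈ps req w i * 2 ^ l⌉₊ := Nat.le_ceil _
  have c2 : (⌈ps req w i * 2 ^ l⌉₊ : ℝ) < ps req w i * 2 ^ l + 1 := Nat.ceil_lt_add_one (by positivity)
  have c3 : ⌈ps req w i * 2 ^ l⌉₊ < 2 ^ l := by
    have : (⌈ps req w i * 2 ^ l⌉₊ : ℝ) < 2 ^ l := by
      rw [ps_succ, if_pos h] at hb
      have e : (2⁻¹:ℝ) ^ w i * 2 ^ l = 2 := by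
        rw [hl, pow_succ, ← mul_assoc, ← mul_pow]; norm_num
      have := mul_le_mul_of_nonneg_right hb hp.le
      rw [add_mul, e] at this
      linarith
    exact_mod_cast this
  obtain ⟨σ, s1, s2⟩ := exists_val l _ c3
  refine ⟨σ, (asg_iff _ _ _ _).2 ⟨h, s1, ?_, ?_⟩⟩
  · rw [s1, s2, le_div_iff₀ hp]; exact c1
  · rw [s1, s2, div_lt_iff₀ hp, add_mul, ← mul_pow]
    norm_num
    linarith

end KC

theorem KC {S : ℕ → Prop} (hS : REPred S) {k x : ℕ → ℕ} (hk : Computable k) (hx : Computable x)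
    (C : ℝ) (H : ∀ F : Finset ℕ, (∀ n ∈ F, S n) → ∑ n ∈ F, (2⁻¹ : ℝ) ^ k n ≤ C) :
    ∃ c, ∀ n, S n → ∃ e, ∃ σ : List Bool, PrefixFreeMachine e ∧
    x n ∈ (Denumerable.ofNat Code e).eval (Encodable.encode σ) ∧
    k n + c = σ.length + 2 * e + 2 := by
  classical
  obtain ⟨d, hd⟩ := pow_unbounded_of_one_lt C (one_lt_two : (1:ℝ) < 2)
  obtain ⟨c, hc⟩ := exists_code_of_re hS
  have hc : ∀ n, S n ↔ ∃ s, (Code.evaln s c n).isSome = true := fun n => by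
    rw [← evaln_dom, ← hc]; rfl
  have mono : ∀ s t n, s ≤ t → (Code.evaln s c n).isSome = true → (Code.evaln t c n).isSome = true := by
    intro s t n hst h
    obtain ⟨y, hy⟩ := Option.isSome_iff_exists.1 h
    exact Option.isSome_iff_exists.2 ⟨y, Code.evaln_mono hst hy⟩
  let req : ℕ → Bool := fun i => (Code.evaln i.unpair.2 c i.unpair.1).isSome &&
    !(Code.evaln (i.unpair.2 - 1) c i.unpair.1).isSome
  let w : ℕ → ℕ := fun i => k i.unpair.1 + d
  have hr : Computable req := by fun_prop
  have hw : Computable w := by fun_prop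
  have req_S : ∀ i, req i = true → S i.unpair.1 := by
    intro i hi
    simp only [req, Bool.and_eq_true] at hi
    exact (hc _).2 ⟨_, hi.1⟩
  have req_inj : ∀ i j, req i = true → req j = true → i.unpair.1 = j.unpair.1 → i = j := by
    intro i j hi hj hij
    simp only [req, Bool.and_eq_true, Bool.not_eq_true', ← Bool.not_eq_true] at hi hj
    have key : i.unpair.2 = j.unpair.2 := by
      rcases Nat.lt_trichotomy i.unpair.2 j.unpair.2 with h | h | h
      · exact absurd (mono _ _ _ (show i.unpair.2 ≤ j.unpair.2 - 1 by omega) (hij ▸ hi.1)) hj.2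
      · exact h
      · exact absurd (mono _ _ _ (show j.unpair.2 ≤ i.unpair.2 - 1 by omega) (hij.symm ▸ hj.1)) hi.2
    rw [← Nat.pair_unpair i, ← Nat.pair_unpair j, hij, key]
  have req_ex : ∀ n, S n → ∃ i, req i = true ∧ i.unpair.1 = n := by
    intro n hn
    have ex := (hc n).1 hn
    refine ⟨Nat.pair n (Nat.find ex), ?_, by simp⟩
    simp only [req, Nat.unpair_pair, Bool.and_eq_true, Bool.not_eq_true', ← Bool.not_eq_true]
    refine ⟨Nat.find_spec ex, Nat.find_min ex ?_⟩
    have : Nat.find ex ≠ 0 := by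
      intro h0
      have := Nat.find_spec ex
      rw [h0] at this
      simp [Code.evaln] at this
    omega
  have bound : ∀ i, ps req w i ≤ 1 := by
    intro i
    rw [ps_eq]
    have e1 : ∑ j ∈ (Finset.range i).filter (fun j => req j = true), (2⁻¹ : ℝ) ^ w j =
        (∑ n ∈ ((Finset.range i).filter (fun j => req j = true)).image (fun j => j.unpair.1),
          (2⁻¹ : ℝ) ^ k n) * 2⁻¹ ^ d := by
      rw [Finset.sum_image, Finset.sum_mul]
      · exact Finset.sum_congr rfl fun j _ => by simp only [w, pow_add]
      · intro a ha b hb hab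
        simp at ha hb
        exact req_inj a b ha.2 hb.2 hab
    rw [e1]
    have := H (((Finset.range i).filter (fun j => req j = true)).image (fun j => j.unpair.1)) (by
      intro n hn
      simp only [Finset.mem_image, Finset.mem_filter] at hn
      obtain ⟨j, hj, rfl⟩ := hn
      exact req_S j hj.2)
    rw [inv_pow, ← div_eq_mul_inv, div_le_one (by positivity)]
    linarith
  -- the machine
  have hm : Partrec (fun σ : List Bool => (Nat.rfind (fun i => Part.some (asg req w σ i))).map
      (fun i => x i.unpair.1)) := by
    refine Partrec.map (Partrec.rfind (p := fun σ i => Part.some (asg req w σ i))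
      (c_asg req w hr hw).partrec.to₂) ?_
    show Computable (fun p : List Bool × ℕ => x p.2.unpair.1)
    fun_prop
  obtain ⟨M, hM⟩ := Code.exists_code.1 hm
  have hM' : ∀ σ : List Bool, M.eval (Encodable.encode σ) =
      (Nat.rfind (fun i => Part.some (asg req w σ i))).map (fun i => x i.unpair.1) := by
    intro σ
    rw [hM]
    simp only [Encodable.encodek, Part.coe_some, Part.bind_some]
    exact Part.map_id' (fun a => rfl) _
  have uniq : ∀ σ i j, asg req w σ i = true → asg req w σ j = true → i = j := fun σ i j h1 h2 =>
    (asg_prefix req w h1 h2 (List.prefix_refl σ)).1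
  have dom : ∀ σ : List Bool, σ ∈ machineDom (Encodable.encode M) → ∃ i, asg req w σ i = true := by
    intro σ h
    simp only [machineDom, Set.mem_ofPred_eq, Denumerable.ofNat_encode, hM'] at h
    have h : (Nat.rfind (fun i => Part.some (asg req w σ i))).Dom := h
    obtain ⟨i, hi, -⟩ := Nat.rfind_dom.1 h
    exact ⟨i, hi.2⟩
  refine ⟨d + 1 + 2 * Encodable.encode M + 2, fun n hn => ?_⟩
  obtain ⟨i, hi, rfl⟩ := req_ex n hn
  obtain ⟨σ, hσ⟩ := asg_exists req w hi (bound _)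
  refine ⟨Encodable.encode M, σ, ?_, ?_, ?_⟩
  · intro σ h1 τ h2 h
    obtain ⟨i, hi⟩ := dom σ h1
    obtain ⟨j, hj⟩ := dom τ h2
    exact (asg_prefix req w hi hj h).2
  · rw [Denumerable.ofNat_encode, hM', Part.mem_map_iff]
    refine ⟨i, ?_, rfl⟩
    refine Nat.mem_rfind.2 ?_
    refine ⟨by simpa using hσ.symm, fun {j} hj => ?_⟩
    simp only [Part.mem_some_iff]
    cases h : asg req w σ j
    · rfl
    · exact absurd (uniq σ i j hσ h) (by omega)
  · rw [((asg_iff _ _ _ _).1 hσ).2.1]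
    simp only [w]
    ring

end DM

end

section
open MeasureTheory ENNReal
namespace DM
open Nat.Partrec (Code)

theorem take_strPrefix' (X : ℕ → Bool) (m n : ℕ) :
    (strPrefix X n).take m = strPrefix X (min m n) := by
  rcases le_total m n with h | h
  · rw [take_strPrefix _ _ _ h, min_eq_left h]
  · rw [List.take_of_length_le (by rw [length_strPrefix]; exact h), min_eq_right h]

/-- comparability of strings -/
def cmp (σ τ : List Bool) : Prop := τ.take σ.length = σ.take τ.length

instance (σ τ : List Bool) : Decidable (cmp σ τ) := by unfold cmp; infer_instance

theorem cmp_symm {σ τ : List Bool} (h : cmp σ τ) : cmp τ σ := Eq.symm h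

theorem disj_of_not_cmp {σ τ : List Bool} (h : ¬ cmp σ τ) :
    Disjoint (_root_.cylinder σ) (_root_.cylinder τ) := by
  rw [Set.disjoint_left]
  intro Z h1 h2
  have h1 : IsPrefixOf σ Z := h1
  have h2 : IsPrefixOf τ Z := h2
  rw [isPrefixOf_iff'] at h1 h2
  apply h
  unfold cmp
  conv_lhs => rw [← h2]
  conv_rhs => rw [← h1]
  rw [take_strPrefix', take_strPrefix', min_comm]

theorem cmp_prefix {σ τ : List Bool} (h : cmp σ τ) : σ <+: τ ∨ τ <+: σ := by
  unfold cmp at h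
  rcases le_total σ.length τ.length with h1 | h1
  · left
    rw [List.take_of_length_le (l := σ) h1] at h
    exact h ▸ List.take_prefix _ _
  · right
    rw [List.take_of_length_le (l := τ) h1] at h
    exact h ▸ List.take_prefix _ _

theorem kraft (F : Finset ℕ) (s : ℕ → List Bool)
    (h : ∀ a ∈ F, ∀ b ∈ F, a ≠ b → ¬ cmp (s a) (s b)) : ∑ n ∈ F, (2⁻¹ : ℝ) ^ (s n).length ≤ 1 := by
  have : m (⋃ n ∈ F, _root_.cylinder (s n)) = ∑ n ∈ F, (2⁻¹ : ℝ) ^ (s n).length := by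
    rw [m, measureReal_biUnion_finset]
    · exact Finset.sum_congr rfl fun n _ => m_cylinder _
    · intro a ha b hb hab
      exact disj_of_not_cmp (h a ha b hb hab)
    · intro n _
      exact measurableSet_cylinder _
  rw [← this]
  exact measureReal_le_one

/-- tuples `(x, e, σ, s, i)` -/
abbrev Tup := List Bool × ℕ × List Bool × ℕ × Bool

def tup (n : ℕ) : Tup := (Encodable.decode (α := Tup) n).getD ([], 0, [], 0, false)

theorem tup_encode (t : Tup) : tup (Encodable.encode t) = t := by simp [tup]

@[fun_prop] theorem c_tup {α : Type*} [Primcodable α] {g : α → ℕ} (hg : Computable g) :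
    Computable (fun x => tup (g x)) := by
  unfold tup
  fun_prop

/-- the machine part of membership -/
def tok (t : Tup) : Bool :=
  (decide (Code.evaln t.2.2.2.1 (Denumerable.ofNat Code t.2.1) (Encodable.encode t.2.2.1) =
    some (Encodable.encode ((List.range t.1.length).map (fun _ => true)))) &&
  !(Code.evaln (t.2.2.2.1 - 1) (Denumerable.ofNat Code t.2.1) (Encodable.encode t.2.2.1)).isSome) &&
  ballB t.2.2.2.1 (fun y =>
    !(decide (Encodable.encode ((Encodable.decode y : Option (List Bool)).getD t.2.2.1) = y)) ||
    ((!(decide (((Encodable.decode y).getD t.2.2.1).take t.2.2.1.length =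
      t.2.2.1.take ((Encodable.decode y).getD t.2.2.1).length)) ||
      decide ((Encodable.decode y).getD t.2.2.1 = t.2.2.1)) ||
    !(Code.evaln t.2.2.2.1 (Denumerable.ofNat Code t.2.1) y).isSome))

theorem c_tok : Computable tok := by
  have h0 : Computable (fun n : ℕ => (List.range n).map (fun _ => true)) :=
    (Primrec.list_map Primrec.list_range (Primrec₂.const true)).to_comp
  have h1 : Computable (fun t : Tup => ((List.range t.1.length).map (fun _ => true))) :=
    h0.comp (f := fun n : ℕ => (List.range n).map (fun _ => true)) (g := fun t : Tup => t.1.length)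
      (by fun_prop)
  refine c_and (c_and (c_eq (by fun_prop) (c_some (c_encode h1))) (by fun_prop)) (c_ball (by fun_prop) ?_)
  have h2 : Computable (fun p : Tup × ℕ => ((Encodable.decode p.2 : Option (List Bool)).getD p.1.2.2.1)) :=
    by fun_prop
  exact c_or (c_not (c_eq (by fun_prop) (by fun_prop))) (c_or (c_or (c_not (c_eq (by fun_prop)
    (by fun_prop))) (c_eq (by fun_prop) (by fun_prop))) (by fun_prop))

theorem tok_iff (x : List Bool) (e : ℕ) (σ : List Bool) (s : ℕ) (i : Bool) :
    tok (x, e, σ, s, i) = true ↔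
    Code.evaln s (Denumerable.ofNat Code e) (Encodable.encode σ) =
      some (Encodable.encode (List.replicate x.length true)) ∧
    Code.evaln (s - 1) (Denumerable.ofNat Code e) (Encodable.encode σ) = none ∧
    ∀ τ : List Bool, cmp σ τ → τ ≠ σ →
      Code.evaln s (Denumerable.ofNat Code e) (Encodable.encode τ) = none := by
  have hr : (List.range x.length).map (fun _ => true) = List.replicate x.length true := by simp
  simp only [tok, Bool.and_eq_true, decide_eq_true_eq, ballB_iff, hr, and_assoc, Bool.not_eq_true',
    Option.isSome_eq_false_iff, Option.isNone_iff_eq_none, Bool.or_eq_true, decide_eq_false_iff_not]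
  refine and_congr_right fun _ => and_congr_right fun _ => ?_
  constructor
  · intro h τ h1 h2
    rcases Nat.lt_or_ge (Encodable.encode τ) s with h3 | h3
    · have := h _ h3
      simp only [Encodable.encodek, Option.getD_some] at this
      rcases this with h4 | (h4 | h4) | h4
      · exact absurd trivial h4
      · exact absurd h1 h4
      · exact absurd h4 h2
      · exact h4
    · cases h4 : Code.evaln s (Denumerable.ofNat Code e) (Encodable.encode τ) with
      | none => rfl
      | some y => exact absurd (Code.evaln_bound h4) (by omega)
  · intro h y hy
    cases h1 : (Encodable.decode y : Option (List Bool)) with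
    | none => right; left; right; simp
    | some τ =>
      simp only [Option.getD_some]
      refine (Classical.em (Encodable.encode τ = y)).symm.imp id fun h1 => ?_
      by_cases h2 : cmp σ τ
      · by_cases h3 : τ = σ
        · exact Or.inl (Or.inr h3)
        · exact Or.inr (h1 ▸ h τ h2 h3)
      · exact Or.inl (Or.inl h2)

theorem evaln_isSome_mono {s t : ℕ} {c : Code} {n : ℕ} (h : s ≤ t) (h2 : Code.evaln t c n = none) :
    Code.evaln s c n = none := by
  cases h3 : Code.evaln s c n with
  | none => rfl
  | some y =>
    have := Code.evaln_mono h h3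
    rw [h2] at this
    simp at this

theorem KT (A : ℕ → Bool) (hA : ¬ KTrivial A) : ∃ (B : ℕ → Bool) (k : ℕ → ℕ) (cls : ℕ → Bool),
    Computable k ∧ Computable cls ∧ TuringLE B A ∧
    (∃ C : ℝ, ∀ F : Finset ℕ, (∀ n ∈ F, B n = true) → ∑ n ∈ F, (2⁻¹ : ℝ) ^ k n ≤ C) ∧
    ∀ i : Bool, ∀ S : ℕ → Prop, REPred S → (∀ n, B n = true → cls n = i → S n) →
      ∀ C : ℝ, ∃ F : Finset ℕ, (∀ n ∈ F, S n) ∧ C < ∑ n ∈ F, (2⁻¹ : ℝ) ^ k n := by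
  classical
  let P : ℕ → Prop := fun n => (Encodable.encode (tup n) = n ∧ tok (tup n) = true) ∧
    IsPrefixOf (tup n).1 A
  let B : ℕ → Bool := fun n => decide (P n)
  have hB : ∀ n, B n = true ↔ P n := fun n => by simp [B]
  refine ⟨B, fun n => (tup n).2.2.1.length + 2 * (tup n).2.1 + 2, fun n => (tup n).2.2.2.2,
    by fun_prop, by fun_prop, ?_, ⟨2, ?_⟩, ?_⟩
  · rw [turingLE_iff]
    have ct : Computable (fun n => tok (tup n)) := c_tok.comp (by fun_prop)
    have p1 : Sig A (fun q : ℕ × Bool => ((Encodable.encode (tup q.1) = q.1 ∧ tok (tup q.1) = true) ∧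
      IsPrefixOf (tup q.1).1 A) ∧ q.2 = true) := by
      refine Sig.and (Sig.and (Sig.and (Sig.of_decide (by fun_prop)) (Sig.of_dec ?_)) ?_)
        (Sig.of_decide (by fun_prop))
      · exact ct.comp (by fun_prop)
      · exact Sig.pre.comp (f := fun q : ℕ × Bool => (tup q.1).1) (by fun_prop)
    have p2 : Sig A (fun q : ℕ × Bool => ((¬ Encodable.encode (tup q.1) = q.1) ∨ tok (tup q.1) = false ∨
        ∃ σ : List Bool, IsPrefixOf σ A ∧ σ.length = (tup q.1).1.length ∧ ¬ σ = (tup q.1).1) ∧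
        q.2 = false) := by
      refine Sig.and (Sig.or (Sig.of_decide ?_) (Sig.or (Sig.of_decide ?_) (Sig.ex' (Sig.and
        (Sig.pre.comp (f := fun q : (ℕ × Bool) × List Bool => q.2) (by fun_prop))
        (Sig.and (Sig.of_decide (by fun_prop)) (Sig.of_decide ?_))))))
        (Sig.of_decide (by fun_prop))
      · simp only [decide_not]; fun_prop
      · have : Computable (fun q : ℕ × Bool => tok (tup q.1)) := ct.comp (by fun_prop)
        fun_prop
      · simp only [decide_not]; fun_prop
    refine (p1.or p2).of_eq fun q => ?_
    obtain ⟨n, b⟩ := q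
    have e : (∃ σ : List Bool, IsPrefixOf σ A ∧ σ.length = (tup n).1.length ∧ ¬ σ = (tup n).1) ↔
        ¬ IsPrefixOf (tup n).1 A := by
      constructor
      · rintro ⟨σ, h1, h2, h3⟩ h4
        rw [isPrefixOf_iff'] at h1 h4
        exact h3 (by rw [← h1, ← h4, h2])
      · intro h
        exact ⟨strPrefix A (tup n).1.length, isPrefixOf_strPrefix _ _, length_strPrefix _ _,
          fun h2 => h ((isPrefixOf_iff' _ _).2 h2)⟩
    simp only [e, B, P]
    cases b
    · cases tok (tup n) <;> simp <;> tauto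
    · simp
  · intro F hF
    have key : ∀ a ∈ F, ∀ b ∈ F, (tup a).2.1 = (tup b).2.1 → (tup a).2.2.2.2 = (tup b).2.2.2.2 →
        a ≠ b → ¬ cmp (tup a).2.2.1 (tup b).2.2.1 := by
      intro a ha b hb h1 h2 h3 h4
      obtain ⟨⟨a1, a2⟩, a3⟩ := (hB a).1 (hF a ha)
      obtain ⟨⟨b1, b2⟩, b3⟩ := (hB b).1 (hF b hb)
      rcases hta : tup a with ⟨xa, ea, σa, sa, ia⟩
      rcases htb : tup b with ⟨xb, eb, σb, sb, ib⟩
      rw [hta] at h1 h2 h4 a1 a2 a3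
      rw [htb] at h1 h2 h4 b1 b2 b3
      simp only at h1 h2 h4 a1 a2 a3 b1 b2 b3
      subst h1 h2
      rw [tok_iff] at a2 b2
      obtain ⟨a4, a5, a6⟩ := a2
      obtain ⟨b4, b5, b6⟩ := b2
      by_cases hσ : σa = σb
      · subst hσ
        have hs : sa = sb := by
          rcases Nat.lt_trichotomy sa sb with h | h | h
          · rw [evaln_isSome_mono (show sa ≤ sb - 1 by omega) b5] at a4
            simp at a4
          · exact h
          · rw [evaln_isSome_mono (show sb ≤ sa - 1 by omega) a5] at b4
            simp at b4
        subst hs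
        rw [a4] at b4
        have hl : xa.length = xb.length := by
          have := congrArg (fun o : Option ℕ => o.map (fun y => ((Encodable.decode y : Option (List Bool))).map List.length)) b4
          simpa using this
        rw [isPrefixOf_iff'] at a3 b3
        have hx : xa = xb := by rw [← a3, ← b3, hl]
        subst hx
        exact h3 (a1.symm.trans b1)
      · rcases le_total sa sb with h | h
        · have := evaln_isSome_mono h (b6 σa (cmp_symm h4) hσ)
          rw [this] at a4; simp at a4
        · have := evaln_isSome_mono h (a6 σb h4 (Ne.symm hσ))
          rw [this] at b4; simp at b4
    let E := F.sup (fun n => (tup n).2.1) + 1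
    have hmaps : ∀ n ∈ F, ((tup n).2.1, (tup n).2.2.2.2) ∈ Finset.range E ×ˢ (Finset.univ : Finset Bool) := by
      intro n hn
      have := Finset.le_sup (f := fun n => (tup n).2.1) hn
      simp only [Finset.mem_product, Finset.mem_range, Finset.mem_univ, and_true, E]
      omega
    rw [← Finset.sum_fiberwise_of_maps_to hmaps, Finset.sum_product]
    have inner : ∀ e : ℕ, ∀ i : Bool, ∑ n ∈ F with ((tup n).2.1, (tup n).2.2.2.2) = (e, i),
        (2⁻¹ : ℝ) ^ ((tup n).2.2.1.length + 2 * (tup n).2.1 + 2) ≤ (1 / 2) ^ e * (1 / 4) := by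
      intro e i
      have k1 := kraft (F.filter (fun n => ((tup n).2.1, (tup n).2.2.2.2) = (e, i)))
        (fun n => (tup n).2.2.1) (by
          intro a ha b hb hab
          simp only [Finset.mem_filter, Prod.mk.injEq] at ha hb
          exact key a ha.1 b hb.1 (ha.2.1.trans hb.2.1.symm) (ha.2.2.trans hb.2.2.symm) hab)
      have k2 : ∑ n ∈ F with ((tup n).2.1, (tup n).2.2.2.2) = (e, i),
        (2⁻¹ : ℝ) ^ ((tup n).2.2.1.length + 2 * (tup n).2.1 + 2) =
        (∑ n ∈ F with ((tup n).2.1, (tup n).2.2.2.2) = (e, i),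
        (2⁻¹ : ℝ) ^ ((tup n).2.2.1.length)) * (2⁻¹ ^ (2 * e) * (1 / 4)) := by
        rw [Finset.sum_mul]
        refine Finset.sum_congr rfl fun n hn => ?_
        simp only [Finset.mem_filter, Prod.mk.injEq] at hn
        rw [hn.2.1, pow_add, pow_add]
        norm_num
        ring
      rw [k2]
      have k3 : (2⁻¹:ℝ) ^ (2 * e) ≤ (1/2) ^ e := by
        rw [one_div]
        exact pow_le_pow_of_le_one (by norm_num) (by norm_num) (by omega)
      calc _ ≤ 1 * ((2⁻¹:ℝ) ^ (2 * e) * (1 / 4)) := mul_le_mul_of_nonneg_right k1 (by positivity)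
        _ ≤ _ := by rw [one_mul]; exact mul_le_mul_of_nonneg_right k3 (by norm_num)
    have hg := sum_geometric_two_le E
    calc _ ≤ ∑ e ∈ Finset.range E, ∑ i : Bool, ((1:ℝ) / 2) ^ e * (1 / 4) :=
          Finset.sum_le_sum fun e _ => Finset.sum_le_sum fun i _ => inner e i
      _ = (∑ e ∈ Finset.range E, ((1:ℝ) / 2) ^ e) * (1 / 2) := by
          rw [Finset.sum_mul]
          refine Finset.sum_congr rfl fun e _ => ?_
          simp; ring
      _ ≤ 2 := by linarith
  · intro i S hS hBS C
    by_contra hcon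
    push Not at hcon
    apply hA
    obtain ⟨c, hc⟩ := KC hS (k := fun n => (tup n).2.2.1.length + 2 * (tup n).2.1 + 2)
      (x := fun n => Encodable.encode (tup n).1) (by fun_prop) (by fun_prop) C hcon
    refine ⟨c, fun N => ?_⟩
    have ne : {k | ∃ e, ∃ σ : List Bool, PrefixFreeMachine e ∧
        (Encodable.encode (List.replicate N true)) ∈ (Denumerable.ofNat Code e).eval (Encodable.encode σ) ∧
        k = σ.length + 2 * e + 2}.Nonempty := by
      have h0 : REPred (fun n : ℕ => n = 0) := by
        apply ComputablePred.to_re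
        apply Computable.computablePred
        fun_prop
      obtain ⟨c, hc⟩ := KC h0 (k := fun _ => 0) (x := fun _ => Encodable.encode (List.replicate N true))
        (by fun_prop) (by fun_prop) 1 (by
          intro F hF
          have : F ⊆ {0} := fun n hn => by simp [hF n hn]
          refine le_trans (Finset.sum_le_sum_of_subset_of_nonneg this fun _ _ _ => by positivity) ?_
          simp)
      obtain ⟨e, σ, h1, h2, h3⟩ := hc 0 rfl
      exact ⟨_, e, σ, h1, h2, rfl⟩
    obtain ⟨e, σ, h1, h2, h3⟩ := Nat.sInf_mem ne
    have h3 : KofNat N = σ.length + 2 * e + 2 := h3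
    rw [Code.evaln_complete] at h2
    let s := Nat.find h2
    have hs : Code.evaln s (Denumerable.ofNat Code e) (Encodable.encode σ) =
        some (Encodable.encode (List.replicate N true)) := Nat.find_spec h2
    have hs0 : s ≠ 0 := by
      intro h0
      rw [h0] at hs
      simp [Code.evaln] at hs
    let t : Tup := (strPrefix A N, e, σ, s, i)
    have hPt : P (Encodable.encode t) := by
      simp only [P, tup_encode]
      refine ⟨⟨trivial, ?_⟩, isPrefixOf_strPrefix _ _⟩
      simp only [t]
      rw [tok_iff, length_strPrefix]
      refine ⟨hs, ?_, ?_⟩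
      · cases h4 : Code.evaln (s - 1) (Denumerable.ofNat Code e) (Encodable.encode σ) with
        | none => rfl
        | some y =>
          have := Code.evaln_mono (show s - 1 ≤ s by omega) h4
          rw [hs] at this
          simp at this
          subst this
          exact absurd h4 (Nat.find_min h2 (show s - 1 < s by omega))
      · intro τ h4 h5
        cases h6 : Code.evaln s (Denumerable.ofNat Code e) (Encodable.encode τ) with
        | none => rfl
        | some y =>
          have d1 : τ ∈ machineDom e := Part.dom_iff_mem.2 ⟨y, Code.evaln_sound h6⟩
          have d2 : σ ∈ machineDom e := Part.dom_iff_mem.2 ⟨_, Code.evaln_sound hs⟩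
          rcases cmp_prefix h4 with h7 | h7
          · exact absurd (h1 σ d2 τ d1 h7).symm h5
          · exact absurd (h1 τ d1 σ d2 h7) h5
    have hSt := hBS _ ((hB _).2 hPt) (by simp only [tup_encode, t])
    obtain ⟨e', σ', g1, g2, g3⟩ := hc _ hSt
    simp only [tup_encode, t] at g2 g3
    rw [h3, g3]
    exact Nat.sInf_le ⟨e', σ', g1, g2, rfl⟩

end DM

end

section
open MeasureTheory ENNReal
namespace DM

theorem V_def_ones (k : ℕ → ℕ) (n : ℕ) : {Z : ℕ → Bool | ∀ i < k n, Z (Nat.pair n i) = true} =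
    ones ((Finset.range (k n)).image (Nat.pair n)) := by
  ext Z; simp [ones]

def V (k : ℕ → ℕ) (n : ℕ) : Set (ℕ → Bool) := {Z | ∀ i < k n, Z (Nat.pair n i) = true}

theorem measurableSet_V (k : ℕ → ℕ) (n : ℕ) : MeasurableSet (V k n) := by
  rw [V, V_def_ones]; exact measurableSet_ones _

theorem card_img (k : ℕ → ℕ) (n : ℕ) : ((Finset.range (k n)).image (Nat.pair n)).card = k n := by
  rw [Finset.card_image_of_injective, Finset.card_range]
  intro a b h
  simpa using h

theorem m_V (k : ℕ → ℕ) (n : ℕ) : m (V k n) = 2⁻¹ ^ k n := by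
  rw [V, V_def_ones, m_ones, card_img]

theorem m_V_inter (k : ℕ → ℕ) {n n' : ℕ} (h : n ≠ n') :
    m (V k n ∩ V k n') = 2⁻¹ ^ k n * 2⁻¹ ^ k n' := by
  have : V k n ∩ V k n' = ones ((Finset.range (k n)).image (Nat.pair n) ∪
      (Finset.range (k n')).image (Nat.pair n')) := by
    rw [V, V, V_def_ones, V_def_ones]
    ext Z
    simp only [ones, Set.mem_inter_iff, Set.mem_ofPred_eq, Finset.mem_union]
    constructor
    · rintro ⟨a, b⟩ i (hi | hi)
      · exact a i hi
      · exact b i hi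
    · intro a
      exact ⟨fun i hi => a i (Or.inl hi), fun i hi => a i (Or.inr hi)⟩
  rw [this, m_ones, Finset.card_union_of_disjoint, card_img, card_img, pow_add]
  rw [Finset.disjoint_left]
  simp only [Finset.mem_image, Finset.mem_range, not_exists, not_and]
  rintro _ ⟨i, hi, rfl⟩ i' hi' h'
  simp only [Nat.pair_eq_pair] at h'
  exact h h'.1.symm

theorem second_moment (k : ℕ → ℕ) (F : Finset ℕ) {Q : Set (ℕ → Bool)} (hQ : MeasurableSet Q) (θ : ℝ)
    (h : ∀ n ∈ F, m (Q ∩ V k n) ≤ θ * 2⁻¹ ^ k n) (w : ℝ) (hw : ∑ n ∈ F, (2⁻¹ : ℝ) ^ k n = w) :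
    w * (w * (m Q - 2 * θ)) ≤ w := by
  classical
  have hw0 : 0 ≤ w := by rw [← hw]; positivity
  let I : Set (ℕ → Bool) → (ℕ → Bool) → ℝ := fun S => S.indicator 1
  have hI : ∀ S, MeasurableSet S → ∫ z, I S z ∂μCantor = m S := fun S hS => integral_indicator_one hS
  have hi : ∀ S, MeasurableSet S → Integrable (I S) μCantor := fun S hS =>
    (integrable_const (1:ℝ)).indicator hS
  have mV := measurableSet_V k
  have e1 : ∫ z, (w ^ 2 * I Q z - 2 * w * ∑ n ∈ F, I (Q ∩ V k n) z) ∂μCantor =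
      w ^ 2 * m Q - 2 * w * ∑ n ∈ F, m (Q ∩ V k n) := by
    rw [integral_sub, integral_const_mul, integral_const_mul, integral_finsetSum, hI _ hQ]
    · rw [Finset.sum_congr rfl fun n _ => hI _ (hQ.inter (mV n))]
    · exact fun n _ => hi _ (hQ.inter (mV n))
    · exact (hi _ hQ).const_mul _
    · exact (integrable_finsetSum _ fun n _ => hi _ (hQ.inter (mV n))).const_mul _
  have e2 : ∫ z, ((∑ n ∈ F, ∑ n' ∈ F, I (V k n ∩ V k n') z) - 2 * w * (∑ n ∈ F, I (V k n) z) + w ^ 2)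
      ∂μCantor = (∑ n ∈ F, ∑ n' ∈ F, m (V k n ∩ V k n')) - 2 * w * (∑ n ∈ F, m (V k n)) + w ^ 2 := by
    have i1 : Integrable (fun z => ∑ n ∈ F, ∑ n' ∈ F, I (V k n ∩ V k n') z) μCantor :=
      integrable_finsetSum _ fun n _ => integrable_finsetSum _ fun n' _ => hi _ ((mV n).inter (mV n'))
    have i2 : Integrable (fun z => 2 * w * ∑ n ∈ F, I (V k n) z) μCantor :=
      (integrable_finsetSum _ fun n _ => hi _ (mV n)).const_mul _
    have i3 : Integrable (fun z => (∑ n ∈ F, ∑ n' ∈ F, I (V k n ∩ V k n') z) -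
      2 * w * ∑ n ∈ F, I (V k n) z) μCantor := i1.sub i2
    rw [integral_add i3 (integrable_const _), integral_sub i1 i2, integral_const_mul,
      integral_finsetSum, integral_finsetSum]
    · rw [Finset.sum_congr rfl fun n _ => hI _ (mV n)]
      rw [Finset.sum_congr rfl fun n _ => integral_finsetSum _ fun n' _ => hi _ ((mV n).inter (mV n'))]
      rw [Finset.sum_congr rfl fun n _ => Finset.sum_congr rfl fun n' _ => hI _ ((mV n).inter (mV n'))]
      simp
    · exact fun n _ => hi _ (mV n)
    · exact fun n _ => integrable_finsetSum _ fun n' _ => hi _ ((mV n).inter (mV n'))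
  have key : w ^ 2 * m Q - 2 * w * ∑ n ∈ F, m (Q ∩ V k n) ≤
      (∑ n ∈ F, ∑ n' ∈ F, m (V k n ∩ V k n')) - 2 * w * (∑ n ∈ F, m (V k n)) + w ^ 2 := by
    rw [← e1, ← e2]
    refine integral_mono ?_ ?_ ?_
    · exact ((hi _ hQ).const_mul _).sub
        ((integrable_finsetSum _ fun n _ => hi _ (hQ.inter (mV n))).const_mul _)
    · exact ((integrable_finsetSum _ fun n _ => integrable_finsetSum _ fun n' _ =>
        hi _ ((mV n).inter (mV n'))).sub
        ((integrable_finsetSum _ fun n _ => hi _ (mV n)).const_mul _)).add (integrable_const _)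
    · intro z
      have a1 : ∀ S T, I (S ∩ T) z = I S z * I T z := by
        intro S T
        simp only [I, Set.inter_indicator_one, Pi.mul_apply]
      simp only [a1, ← Finset.mul_sum, ← Finset.sum_mul]
      set f := ∑ n ∈ F, I (V k n) z
      have a2 : I Q z = 0 ∨ I Q z = 1 := by
        by_cases hz : z ∈ Q <;> simp [I, hz]
      rcases a2 with a2 | a2 <;> rw [a2] <;> nlinarith [sq_nonneg (f - w), sq_nonneg f]
  have b1 : ∑ n ∈ F, m (V k n) = w := by
    rw [← hw]; exact Finset.sum_congr rfl fun n _ => m_V k n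
  have b2 : ∑ n ∈ F, ∑ n' ∈ F, m (V k n ∩ V k n') ≤ w ^ 2 + w := by
    have : ∀ n n', m (V k n ∩ V k n') ≤ 2⁻¹ ^ k n * 2⁻¹ ^ k n' + if n' = n then 2⁻¹ ^ k n else 0 := by
      intro n n'
      by_cases hn : n = n'
      · subst hn
        simp only [Set.inter_self, if_true, m_V]
        have : (0:ℝ) ≤ 2⁻¹ ^ k n * 2⁻¹ ^ k n := by positivity
        linarith
      · rw [m_V_inter k hn, if_neg (Ne.symm hn), add_zero]
    calc _ ≤ ∑ n ∈ F, ∑ n' ∈ F, ((2⁻¹:ℝ) ^ k n * 2⁻¹ ^ k n' + if n' = n then 2⁻¹ ^ k n else 0) :=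
          Finset.sum_le_sum fun n _ => Finset.sum_le_sum fun n' _ => this n n'
      _ = w ^ 2 + w := by
        simp only [Finset.sum_add_distrib, ← Finset.mul_sum, ← Finset.sum_mul, hw]
        congr 1
        · ring
        · rw [← hw]
          refine Finset.sum_congr rfl fun n hn => ?_
          simp [hn]
  have b3 : ∑ n ∈ F, m (Q ∩ V k n) ≤ θ * w := by
    rw [← hw, Finset.mul_sum]
    exact Finset.sum_le_sum h
  rw [b1] at key
  nlinarith [mul_le_mul_of_nonneg_left b3 hw0]
end DM

end

section
open MeasureTheory ENNReal
namespace DM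

/-- open set with index `e` -/
def U (e : ℕ) : Set (ℕ → Bool) := openOf {σ | WEnum e (Encodable.encode σ)}

theorem openIdx {α : Type*} [Primcodable α] {T : α × List Bool → Prop} (h : Sig emptyOracle T) :
    ∃ f : α → ℕ, Computable f ∧ ∀ a, U (f a) = openOf {σ | T (a, σ)} := by
  obtain ⟨f, hf, H⟩ := smn h.re
  refine ⟨f, hf, fun a => ?_⟩
  simp only [U, H]

theorem idx_V {k : ℕ → ℕ} (hk : Computable k) : ∃ f : ℕ → ℕ, Computable f ∧ ∀ n, U (f n) = V k n := by
  have : Sig emptyOracle (fun q : ℕ × List Bool => ∀ i < k q.1, q.2[Nat.pair q.1 i]? = some true) :=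
    Sig.ball' (f := fun q : ℕ × List Bool => k q.1)
      (p := fun q i => q.2[Nat.pair q.1 i]? = some true) (by fun_prop) (Sig.of_decide (by fun_prop))
  obtain ⟨f, hf, H⟩ := openIdx this
  refine ⟨f, hf, fun n => ?_⟩
  rw [H]
  ext Z
  rw [mem_openOf]
  simp only [Set.mem_ofPred_eq, getElem?_strPrefix, V]
  constructor
  · rintro ⟨t, h⟩ i hi
    have := h i hi
    split_ifs at this
    simpa using this
  · intro h
    obtain ⟨t, ht⟩ : ∃ t, ∀ i ∈ (Finset.range (k n)).image (Nat.pair n), i < t :=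
      ⟨_, fun i hi => Nat.lt_succ_of_le (Finset.le_sup (f := id) hi)⟩
    refine ⟨t, fun i hi => ?_⟩
    rw [if_pos (ht _ (Finset.mem_image_of_mem _ (Finset.mem_range.2 hi))), h i hi]

theorem idx_Vc {k : ℕ → ℕ} (hk : Computable k) :
    ∃ f : ℕ → ℕ, Computable f ∧ ∀ n, U (f n) = (V k n)ᶜ := by
  have : Sig emptyOracle (fun q : ℕ × List Bool => ∃ i : ℕ, i < k q.1 ∧
      q.2[Nat.pair q.1 i]? = some false) :=
    Sig.ex' (p := fun (q : ℕ × List Bool) (i : ℕ) => i < k q.1 ∧ q.2[Nat.pair q.1 i]? = some false)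
      ((Sig.of_decide (by fun_prop)).and (Sig.of_decide (by fun_prop)))
  obtain ⟨f, hf, H⟩ := openIdx this
  refine ⟨f, hf, fun n => ?_⟩
  rw [H]
  ext Z
  rw [mem_openOf]
  simp only [Set.mem_ofPred_eq, getElem?_strPrefix, V, Set.mem_compl_iff, not_forall, Bool.not_eq_true]
  constructor
  · rintro ⟨t, i, hi, h⟩
    split_ifs at h
    exact ⟨i, hi, by simpa using h⟩
  · rintro ⟨i, hi, h⟩
    exact ⟨Nat.pair n i + 1, i, hi, by simp [h]⟩

theorem idx_bit : ∃ f : ℕ × Bool → ℕ, Computable f ∧ ∀ r b, U (f (r, b)) = {Z | Z r ≠ b} := by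
  have : Sig emptyOracle (fun q : (ℕ × Bool) × List Bool => q.2[q.1.1]? = some (!q.1.2)) :=
    Sig.of_decide (by fun_prop)
  obtain ⟨f, hf, H⟩ := openIdx this
  refine ⟨f, hf, fun r b => ?_⟩
  rw [H]
  ext Z
  rw [mem_openOf]
  simp only [Set.mem_ofPred_eq, getElem?_strPrefix]
  constructor
  · rintro ⟨t, h⟩
    split_ifs at h
    simp at h
    simp [h]
  · rintro h
    refine ⟨r + 1, ?_⟩
    simp
    revert h
    cases Z r <;> cases b <;> simp

theorem idx_cyl : ∃ f : List Bool → ℕ, Computable f ∧ ∀ τ, U (f τ) = (cylinder τ)ᶜ := by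
  have : Sig emptyOracle (fun q : List Bool × List Bool => q.1.length = q.2.length ∧ (!decide (q.1 = q.2)) = true) :=
    (Sig.of_decide (by fun_prop)).and (Sig.of_dec (by fun_prop))
  obtain ⟨f, hf, H⟩ := openIdx this
  refine ⟨f, hf, fun τ => ?_⟩
  rw [H]
  ext Z
  rw [mem_openOf]
  simp only [Set.mem_ofPred_eq, length_strPrefix, Set.mem_compl_iff, _root_.cylinder, isPrefixOf_iff']
  constructor
  · rintro ⟨t, rfl, h⟩ h'
    simp [h'] at h
  · intro h
    refine ⟨_, rfl, ?_⟩
    have h' : ¬ τ = strPrefix Z τ.length := fun h1 => h h1.symm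
    simpa using h'

theorem idx_test : ∃ f : ℕ × ℕ → ℕ, Computable f ∧
    ∀ e n, U (f (e, n)) = testLevel e emptyOracle n := by
  have : Sig emptyOracle (fun q : (ℕ × ℕ) × List Bool => ∃ m : ℕ,
      OracleComputes q.1.1 emptyOracle (Nat.pair q.1.2 (Encodable.encode q.2)) m) :=
    Sig.ex' (Sig.oc.comp (f := fun q : ((ℕ × ℕ) × List Bool) × ℕ =>
      (q.1.1.1, Nat.pair q.1.1.2 (Encodable.encode q.1.2), q.2)) (by fun_prop))
  obtain ⟨f, hf, H⟩ := openIdx this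
  exact ⟨f, hf, fun e n => H _⟩

/-- domain of convergence -/
theorem idx_dom : ∃ f : ℕ × ℕ → ℕ, Computable f ∧
    ∀ e n, U (f (e, n)) = {Z | ∃ m, OracleComputes e Z n m} := by
  have : Sig emptyOracle (fun q : (ℕ × ℕ) × List Bool => ∃ m : ℕ,
      WEnum q.1.1 (Nat.pair (Encodable.encode q.2) (Nat.pair q.1.2 m))) :=
    Sig.ex' (Sig.wenum.comp (f := fun q : ((ℕ × ℕ) × List Bool) × ℕ =>
      (q.1.1.1, Nat.pair (Encodable.encode q.1.2) (Nat.pair q.1.1.2 q.2))) (by fun_prop))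
  obtain ⟨f, hf, H⟩ := openIdx this
  refine ⟨f, hf, fun e n => ?_⟩
  rw [H]
  ext Z
  simp only [openOf, Set.mem_iUnion, Set.mem_ofPred_eq, _root_.cylinder, OracleComputes]
  grind

theorem measurableSet_U (e : ℕ) : MeasurableSet (U e) := measurableSet_openOf _

/-- the complement of the forbidden strings -/
def Bad (B : ℕ → Bool) (k : ℕ → ℕ) (l : List ℕ) (j : ℕ) : Set (List Bool) :=
  {σ | (∃ e ∈ l, WEnum e (Encodable.encode σ)) ∨
    ∃ n, (j ≤ n ∧ B n = true) ∧ ∀ i < k n, σ[Nat.pair n i]? = some true}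

def Q (B : ℕ → Bool) (k : ℕ → ℕ) (l : List ℕ) (j : ℕ) : Set (ℕ → Bool) :=
  {Z | (∀ e ∈ l, Z ∉ U e) ∧ ∀ n, j ≤ n → B n = true → Z ∉ V k n}

theorem Q_eq (B : ℕ → Bool) (k : ℕ → ℕ) (l : List ℕ) (j : ℕ) : Q B k l j = (openOf (Bad B k l j))ᶜ := by
  ext Z
  rw [← not_iff_not, Set.mem_compl_iff, not_not, mem_openOf]
  simp only [Q, Bad, Set.mem_ofPred_eq, U, mem_openOf, getElem?_strPrefix, V]
  constructor
  · intro h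
    rw [not_and_or] at h
    push Not at h
    rcases h with ⟨e, he, t, ht⟩ | ⟨n, hn, hB, h⟩
    · exact ⟨t, Or.inl ⟨e, he, ht⟩⟩
    · obtain ⟨t, ht⟩ : ∃ t, ∀ i ∈ (Finset.range (k n)).image (Nat.pair n), i < t :=
        ⟨_, fun i hi => Nat.lt_succ_of_le (Finset.le_sup (f := id) hi)⟩
      refine ⟨t, Or.inr ⟨n, ⟨hn, hB⟩, fun i hi => ?_⟩⟩
      rw [if_pos (ht _ (Finset.mem_image_of_mem _ (Finset.mem_range.2 hi))), h i hi]
  · rintro ⟨t, ⟨e, he, h⟩ | ⟨n, hn, h⟩⟩ ⟨h1, h2⟩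
    · exact h1 e he ⟨t, h⟩
    · refine h2 n hn.1 hn.2 fun i hi => ?_
      have := h i hi
      split_ifs at this
      simpa using this

theorem measurableSet_Q (B : ℕ → Bool) (k : ℕ → ℕ) (l : List ℕ) (j : ℕ) : MeasurableSet (Q B k l j) := by
  rw [Q_eq]; exact (measurableSet_openOf _).compl

theorem m_compl {S : Set (ℕ → Bool)} (h : MeasurableSet S) : m Sᶜ = 1 - m S := by
  rw [m, probReal_compl_eq_one_sub h]

theorem small_iff {S : Set (ℕ → Bool)} (h : MeasurableSet S) (q : ℕ) :
    m Sᶜ < 2⁻¹ ^ q ↔ (((2 ^ q - 1 : ℕ) : ℕ) : ℝ) < m S * 2 ^ q := by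
  rw [m_compl h, Nat.cast_sub Nat.one_le_two_pow]
  push_cast
  have : (0:ℝ) < 2 ^ q := by positivity
  rw [inv_pow, ← one_div, lt_div_iff₀ this]
  constructor <;> intro h <;> linarith

def Good (B : ℕ → Bool) (k : ℕ → ℕ) (l : List ℕ) (j : ℕ) : Prop := 0 < m (Q B k l j)

theorem small_sig {A B : ℕ → Bool} {k : ℕ → ℕ} (hB : TuringLE B A) (hk : Computable k) :
    Sig A (fun c : (List ℕ × ℕ) × ℕ => m (Q B k c.1.1 c.1.2) < 2⁻¹ ^ c.2) := by
  have a1 : Sig A (fun q : (List ℕ × ℕ) × List Bool =>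
      ∃ e ∈ q.1.1, WEnum e (Encodable.encode q.2)) :=
    Sig.mem_list (l := fun q : (List ℕ × ℕ) × List Bool => q.1.1)
        (p := fun q e => WEnum e (Encodable.encode q.2)) (by fun_prop)
        (Sig.wenum.comp (f := fun q : ((List ℕ × ℕ) × List Bool) × ℕ =>
          (q.2, Encodable.encode q.1.2)) (by fun_prop))
  have a2 : Sig A (fun q : ((List ℕ × ℕ) × List Bool) × ℕ => q.1.1.2 ≤ q.2) :=
    Sig.of_decide (c_le (f := fun q : ((List ℕ × ℕ) × List Bool) × ℕ => q.1.1.2) (g := fun q => q.2)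
      (c_snd (c_fst (c_fst c_id))) (c_snd c_id))
  have a3 : Sig A (fun q : ((List ℕ × ℕ) × List Bool) × ℕ => B q.2 = true) :=
    (turingLE_iff.1 hB).comp
        (f := fun q : ((List ℕ × ℕ) × List Bool) × ℕ => (q.2, true)) (by fun_prop)
  have a4 : Sig A (fun q : ((List ℕ × ℕ) × List Bool) × ℕ =>
      ∀ i < k q.2, q.1.2[Nat.pair q.2 i]? = some true) :=
    Sig.ball' (f := fun q : ((List ℕ × ℕ) × List Bool) × ℕ => k q.2)
        (p := fun q i => q.1.2[Nat.pair q.2 i]? = some true) (by fun_prop)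
        (Sig.of_decide (by fun_prop))
  have h1 : Sig A (fun q : (List ℕ × ℕ) × List Bool => q.2 ∈ Bad B k q.1.1 q.1.2) :=
    (a1.or ((a2.and a3).and a4).ex).of_eq fun q => Iff.rfl
  have h2 := h1.threshold
  refine (h2.comp (f := fun c : (List ℕ × ℕ) × ℕ => (c.1, 2 ^ c.2 - 1, c.2))
    (c_pair (by fun_prop) (c_pair (c_sub (c_two_pow (by fun_prop)) (by fun_prop)) (by fun_prop)))).of_eq fun c => ?_
  rw [Q_eq, small_iff (measurableSet_openOf _)]
  rfl

theorem good_sig {A B : ℕ → Bool} {k : ℕ → ℕ} (hB : TuringLE B A) (hk : Computable k) :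
    Sig (jump A) (fun c : List ℕ × ℕ => Good B k c.1 c.2) := by
  refine (small_sig hB hk).not_jump.ex.of_eq fun c => ?_
  simp only [not_lt, Good]
  constructor
  · rintro ⟨q, hq⟩
    exact lt_of_lt_of_le (by positivity) hq
  · intro h
    obtain ⟨q, hq⟩ := exists_pow_lt_of_lt_one h (show (2⁻¹:ℝ) < 1 by norm_num)
    exact ⟨q, hq.le⟩
end DM

end

section
open MeasureTheory ENNReal
namespace DM

noncomputable def bw (B : ℕ → Bool) (k : ℕ → ℕ) (n : ℕ) : ℝ := if B n = true then 2⁻¹ ^ k n else 0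

theorem bw_nonneg (B : ℕ → Bool) (k : ℕ → ℕ) (n : ℕ) : 0 ≤ bw B k n := by
  unfold bw; split_ifs <;> positivity

def Bdd (B : ℕ → Bool) (k : ℕ → ℕ) : Prop :=
  ∃ C : ℝ, ∀ F : Finset ℕ, (∀ n ∈ F, B n = true) → ∑ n ∈ F, (2⁻¹:ℝ) ^ k n ≤ C

theorem summable_bw {B : ℕ → Bool} {k : ℕ → ℕ} (h : Bdd B k) : Summable (bw B k) := by
  obtain ⟨C, hC⟩ := h
  refine summable_of_sum_le (bw_nonneg B k) (c := C) fun F => ?_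
  refine le_trans (le_of_eq ?_) (hC (F.filter (fun n => B n = true)) (by simp))
  rw [Finset.sum_filter]
  rfl

theorem tail_small {B : ℕ → Bool} {k : ℕ → ℕ} {ε : ℝ} (hε : 0 < ε) (j : ℕ) :
    ∃ N ≥ j, ∑' i, bw B k (i + N) < ε := by
  have := tendsto_sum_nat_add (bw B k)
  obtain ⟨N, h1, h2⟩ := ((this.eventually (gt_mem_nhds hε)).and (Filter.eventually_ge_atTop j)).exists
  exact ⟨N, h2, h1⟩

theorem union_bound {B : ℕ → Bool} {k : ℕ → ℕ} (hB : Bdd B k) (S : Set (ℕ → Bool)) {c : ℝ} (hc : 0 ≤ c)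
    (p : ℕ → Prop) (N : ℕ) (h : ∀ n ≥ N, p n → m (S ∩ V k n) ≤ c * 2⁻¹ ^ k n) :
    m (S ∩ {Z | ∃ n ≥ N, B n = true ∧ p n ∧ Z ∈ V k n}) ≤ c * ∑' i, bw B k (i + N) := by
  classical
  have hs : Summable (fun i => c * bw B k (i + N)) :=
    ((summable_nat_add_iff N).2 (summable_bw hB)).mul_left c
  have h0 : ∀ i, 0 ≤ c * bw B k (i + N) := fun i => mul_nonneg hc (bw_nonneg _ _ _)
  rw [← tsum_mul_left, m, measureReal_def]
  refine ENNReal.toReal_le_of_le_ofReal (tsum_nonneg h0) ?_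
  rw [ENNReal.ofReal_tsum_of_nonneg h0 hs]
  calc _ ≤ μCantor (⋃ i, if B (i + N) = true ∧ p (i + N) then S ∩ V k (i + N) else ∅) := by
        refine measure_mono ?_
        rintro Z ⟨hZ, n, hn, h1, h2, h3⟩
        simp only [Set.mem_iUnion]
        refine ⟨n - N, ?_⟩
        rw [Nat.sub_add_cancel hn, if_pos ⟨h1, h2⟩]
        exact ⟨hZ, h3⟩
    _ ≤ ∑' i, μCantor (if B (i + N) = true ∧ p (i + N) then S ∩ V k (i + N) else ∅) :=
        measure_iUnion_le _
    _ ≤ _ := by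
        refine ENNReal.tsum_le_tsum fun i => ?_
        split_ifs with hi
        · rw [← ofReal_measureReal (measure_ne_top _ _)]
          refine ENNReal.ofReal_le_ofReal ?_
          simp only [bw, if_pos hi.1]
          exact h _ (by omega) hi.2
        · simp

theorem m_le_add (S T : Set (ℕ → Bool)) : m S ≤ m (S \ T) + m (S ∩ T) := by
  have : S ⊆ (S \ T) ∪ (S ∩ T) := by rw [Set.sdiff_union_inter]
  exact (measureReal_mono this (measure_ne_top _ _)).trans (measureReal_union_le _ _)

theorem m_mono {S T : Set (ℕ → Bool)} (h : S ⊆ T) : m S ≤ m T := measureReal_mono h (measure_ne_top _ _)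

theorem good_init {B : ℕ → Bool} {k : ℕ → ℕ} (hB : Bdd B k) : ∃ j, Good B k [] j := by
  obtain ⟨N, -, hN⟩ := tail_small (B := B) (k := k) (ε := 1) one_pos 0
  refine ⟨N, ?_⟩
  have h1 := union_bound hB Set.univ (c := 1) zero_le_one (fun _ => True) N
    (fun n _ _ => by rw [Set.univ_inter, m_V]; linarith)
  have h2 := m_le_add Set.univ {Z | ∃ n ≥ N, B n = true ∧ True ∧ Z ∈ V k n}
  have h3 : m (Set.univ \ {Z | ∃ n ≥ N, B n = true ∧ True ∧ Z ∈ V k n}) ≤ m (Q B k [] N) := by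
    refine m_mono ?_
    rintro Z ⟨-, hZ⟩
    simp only [Set.mem_ofPred_eq, not_exists, not_and] at hZ
    exact ⟨by simp, fun n a b c => hZ n a b trivial c⟩
  have h4 : m Set.univ = 1 := by simp [m]
  show 0 < m _
  linarith

theorem coding {B : ℕ → Bool} {k : ℕ → ℕ} {cls : ℕ → Bool} (hk : Computable k) (hB : Bdd B k)
    (KT : ∀ i S, REPred S → (∀ n, B n = true → cls n = i → S n) → ∀ C:ℝ,
      ∃ F : Finset ℕ, (∀ n∈F, S n) ∧ C < ∑ n∈F, (2⁻¹:ℝ)^k n)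
    {kV kVc : ℕ → ℕ} (hkVc : Computable kVc)
    (hV : ∀ n, U (kV n) = V k n) (hVc : ∀ n, U (kVc n) = (V k n)ᶜ)
    {l : List ℕ} {j : ℕ} (hg : Good B k l j) (i : Bool) :
    ∃ n ≥ j, B n = true ∧ cls n = i ∧ ∃ l' : List ℕ, l ⊆ l' ∧ kVc n ∈ l' ∧
      (∀ n' < n, n' < j ∨ B n' = false ∨ kV n' ∈ l') ∧ Good B k l' (n + 1) := by
  classical
  set δ := m (Q B k l j) with hδ
  have hδ0 : 0 < δ := hg
  obtain ⟨p, hp⟩ := exists_pow_lt_of_lt_one (show (0:ℝ) < δ / 4 by linarith) (show (2⁻¹:ℝ) < 1 by norm_num)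
  set θ : ℝ := 2⁻¹ ^ p with hθ
  have hθ0 : 0 < θ := by positivity
  obtain ⟨N, hNj, hN⟩ := tail_small (B := B) (k := k) hθ0 j
  set ε := ∑' i, bw B k (i + N) with hε
  let M : ℕ → ℕ → List ℕ := fun a b => ((List.range b).filter (fun n => decide (a ≤ n) && B n)).map kV
  have memM : ∀ a b e, e ∈ M a b ↔ ∃ n, (n < b ∧ a ≤ n ∧ B n = true) ∧ kV n = e := by
    intro a b e; simp [M]
  let l1 := M j N ++ l
  have memQ : ∀ L Z, Z ∈ Q emptyOracle k L 0 ↔ ∀ e ∈ L, Z ∉ U e := by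
    intro L Z; simp [Q, emptyOracle]
  let P : Set (ℕ → Bool) := Q emptyOracle k l1 0
  have hPV : ∀ n, P ∩ V k n = Q emptyOracle k (kVc n :: l1) 0 := by
    intro n
    ext Z
    simp only [P, Set.mem_inter_iff, memQ, List.mem_cons, forall_eq_or_imp, hVc, Set.mem_compl_iff, not_not]
    exact and_comm
  have hPm : MeasurableSet P := measurableSet_Q _ _ _ _
  have hPδ : δ ≤ m P := by
    refine m_mono ?_
    rintro Z ⟨h1, h2⟩
    rw [memQ]
    intro e he
    rcases List.mem_append.1 he with he | he
    · obtain ⟨n, ⟨_, h3, h4⟩, rfl⟩ := (memM _ _ _).1 he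
      rw [hV]
      exact h2 n h3 h4
    · exact h1 e he
  have key : ∃ n ≥ N, B n = true ∧ cls n = i ∧ θ * 2⁻¹ ^ k n ≤ m (P ∩ V k n) := by
    by_contra hcon
    push Not at hcon
    let S : ℕ → Prop := fun n => n < N ∨ m (P ∩ V k n) < 2⁻¹ ^ (p + k n)
    have hS : REPred S := by
      apply Sig.re
      have h1 : Sig emptyOracle (fun n : ℕ => n < N) := Sig.of_decide (by fun_prop)
      have h2 := (small_sig (A := emptyOracle) (B := emptyOracle) (turingLE_iff.2 Sig.oracle) hk).comp
        (f := fun n => ((kVc n :: l1, 0), p + k n)) (by fun_prop)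
      refine (h1.or h2).of_eq fun n => ?_
      simp only [S, hPV]
    obtain ⟨F, hF, hFw⟩ := KT i S hS (fun n h1 h2 => by
      rcases Nat.lt_or_ge n N with h | h
      · exact Or.inl h
      · right; rw [pow_add]; exact hcon n h h1 h2) (∑ n ∈ Finset.range N, (2⁻¹:ℝ) ^ k n + 1 / (δ - 2 * θ))
    set F' := F.filter (fun n => N ≤ n) with hF'
    have h1 : ∑ n ∈ F, (2⁻¹:ℝ) ^ k n ≤ ∑ n ∈ Finset.range N, (2⁻¹:ℝ) ^ k n + ∑ n ∈ F', (2⁻¹:ℝ) ^ k n := by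
      rw [← Finset.sum_filter_add_sum_filter_not F (fun n => N ≤ n), add_comm]
      gcongr
      intro n hn
      simp at hn ⊢
      exact hn.2
    have h2 := second_moment k F' hPm θ (fun n hn => by
      have hn' := Finset.mem_filter.1 hn
      rcases hF n hn'.1 with h | h
      · omega
      · rw [pow_add] at h; exact h.le) _ rfl
    set w := ∑ n ∈ F', (2⁻¹:ℝ) ^ k n with hw
    have h3 : 0 < δ - 2 * θ := by linarith
    have h4 : 1 / (δ - 2 * θ) < w := by linarith
    have h5 : 0 < w := lt_trans (by positivity) h4
    rw [div_lt_iff₀ h3] at h4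
    have h6 : w * (m P - 2 * θ) ≤ 1 := by
      by_contra hc
      push Not at hc
      nlinarith
    nlinarith
  obtain ⟨n, hn, hBn, hcn, hmn⟩ := key
  refine ⟨n, hNj.trans hn, hBn, hcn, kVc n :: (M j n ++ l), ?_, by simp, ?_, ?_⟩
  · intro e he; simp [he]
  · intro n' hn'
    by_cases h1 : n' < j
    · exact Or.inl h1
    · by_cases h2 : B n' = true
      · right; right
        refine List.mem_cons_of_mem _ (List.mem_append_left _ ((memM _ _ _).2 ⟨n', ⟨hn', by omega, h2⟩, rfl⟩))
      · right; left; simpa using h2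
  · have h1 := union_bound hB (V k n) (c := 2⁻¹ ^ k n) (by positivity) (fun n' => n' ≠ n) N
      (fun n' _ h => by rw [m_V_inter k (Ne.symm h)])
    set W := {Z | ∃ n' ≥ N, B n' = true ∧ n' ≠ n ∧ Z ∈ V k n'} with hW
    have h2 := m_le_add (P ∩ V k n) W
    have h3 : m (P ∩ V k n ∩ W) ≤ m (V k n ∩ W) := m_mono (fun Z h => ⟨h.1.2, h.2⟩)
    have h4 : m ((P ∩ V k n) \ W) ≤ m (Q B k (kVc n :: (M j n ++ l)) (n + 1)) := by
      refine m_mono ?_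
      rintro Z ⟨⟨hZP, hZV⟩, hZW⟩
      simp only [hW, Set.mem_ofPred_eq, not_exists, not_and] at hZW
      have hZP' := (memQ _ _).1 hZP
      refine ⟨?_, fun n' h1 h2 => hZW n' (by omega) h2 (by omega)⟩
      intro e he
      rcases List.mem_cons.1 he with rfl | he
      · rw [hVc]; simpa using hZV
      · rcases List.mem_append.1 he with he | he
        · obtain ⟨n', ⟨g1, g2, g3⟩, rfl⟩ := (memM _ _ _).1 he
          rcases Nat.lt_or_ge n' N with g4 | g4
          · exact hZP' _ (List.mem_append_left _ ((memM _ _ _).2 ⟨n', ⟨g4, g2, g3⟩, rfl⟩))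
          · rw [hV]; exact hZW n' g4 g3 (by omega)
        · exact hZP' _ (List.mem_append_right _ he)
    have h5 : (0:ℝ) < 2⁻¹ ^ k n := by positivity
    show 0 < m _
    nlinarith
end DM

end

section
open MeasureTheory ENNReal
namespace DM
variable {B : ℕ → Bool} {k : ℕ → ℕ}

theorem mem_Q_cons {e : ℕ} {l : List ℕ} {j : ℕ} {Z : ℕ → Bool} :
    Z ∈ Q B k (e :: l) j ↔ Z ∉ U e ∧ Z ∈ Q B k l j := by
  simp [Q, and_assoc]

theorem bit_step {k0 : ℕ × Bool → ℕ} (h0 : ∀ r b, U (k0 (r, b)) = {Z | Z r ≠ b})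
    {l : List ℕ} {j : ℕ} (hg : Good B k l j) (r : ℕ) : ∃ b, Good B k (k0 (r, b) :: l) j := by
  by_contra hcon
  push Not at hcon
  have h1 : m (Q B k l j) ≤ m (Q B k (k0 (r, true) :: l) j ∪ Q B k (k0 (r, false) :: l) j) := by
    refine m_mono fun Z hZ => ?_
    cases h : Z r
    · exact Or.inr (mem_Q_cons.2 ⟨by simp [h0, h], hZ⟩)
    · exact Or.inl (mem_Q_cons.2 ⟨by simp [h0, h], hZ⟩)
  have h2 := measureReal_union_le (μ := μCantor) (Q B k (k0 (r, true) :: l) j) (Q B k (k0 (r, false) :: l) j)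
  have h3 := hcon true
  have h4 := hcon false
  simp only [Good, m] at *
  linarith

theorem ml_step {k1 : ℕ × ℕ → ℕ} (h1 : ∀ e n, U (k1 (e, n)) = testLevel e emptyOracle n)
    {l : List ℕ} {j : ℕ} (hg : Good B k l j) (e : ℕ)
    (he : ∀ n, μCantor (testLevel e emptyOracle n) ≤ 2⁻¹ ^ n) : ∃ n, Good B k (k1 (e, n) :: l) j := by
  obtain ⟨n, hn⟩ := exists_pow_lt_of_lt_one hg (show (2⁻¹:ℝ) < 1 by norm_num)
  refine ⟨n, ?_⟩
  have a1 : m (testLevel e emptyOracle n) ≤ 2⁻¹ ^ n := by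
    have := ENNReal.toReal_mono (by simp) (he n)
    simpa [m, measureReal_def] using this
  have a2 := m_le_add (Q B k l j) (testLevel e emptyOracle n)
  have a3 : m (Q B k l j \ testLevel e emptyOracle n) = m (Q B k (k1 (e, n) :: l) j) := by
    congr 1
    ext Z
    rw [mem_Q_cons, h1]
    exact and_comm
  have a4 : m (Q B k l j ∩ testLevel e emptyOracle n) ≤ m (testLevel e emptyOracle n) :=
    m_mono Set.inter_subset_right
  show 0 < m _
  linarith

theorem cone_step {k2 : ℕ × ℕ → ℕ} {k3 : List Bool → ℕ}
    (h2 : ∀ e n, U (k2 (e, n)) = {Z | ∃ m, OracleComputes e Z n m})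
    (h3 : ∀ τ, U (k3 τ) = (cylinder τ)ᶜ)
    {l : List ℕ} {j : ℕ} (hg : Good B k l j) (e : ℕ) (Z : ℕ → Bool)
    (n2 : ∀ n, ¬ Good B k (k2 (e, n) :: l) j)
    (n3 : ∀ τ n m', m' ≠ natOfBool (Z n) → WEnum e (Nat.pair (Encodable.encode τ) (Nat.pair n m')) →
      ¬ Good B k (k3 τ :: l) j) : ComputableSet Z := by
  classical
  have null : ∀ L : List ℕ, ¬ Good B k L j → μCantor (Q B k L j) = 0 := by
    intro L hL
    have : m (Q B k L j) = 0 := le_antisymm (not_lt.1 hL) measureReal_nonneg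
    exact (measureReal_eq_zero_iff (measure_ne_top _ _)).1 this
  let N : Set (ℕ → Bool) := (⋃ n, Q B k (k2 (e, n) :: l) j) ∪
    ⋃ q : {q : List Bool × ℕ × ℕ // q.2.2 ≠ natOfBool (Z q.2.1) ∧
      WEnum e (Nat.pair (Encodable.encode q.1) (Nat.pair q.2.1 q.2.2))}, Q B k (k3 q.1.1 :: l) j
  have hN : μCantor N = 0 := by
    rw [measure_union_null_iff]
    refine ⟨measure_iUnion_null fun n => null _ (n2 n), measure_iUnion_null fun q => null _ ?_⟩
    exact n3 _ _ _ q.2.1 q.2.2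
  have hY : ∀ Y ∈ Q B k l j \ N, ∀ n b, OracleComputes e Y n (natOfBool b) ↔ b = Z n := by
    rintro Y ⟨hY, hYN⟩ n b
    simp only [N, Set.mem_union, Set.mem_iUnion, not_or, not_exists, mem_Q_cons, not_and_or, not_not, hY,
      not_true, or_false, h2, h3, Set.mem_compl_iff] at hYN
    obtain ⟨a1, a2⟩ := hYN
    have uniq : ∀ m', OracleComputes e Y n m' → m' = natOfBool (Z n) := by
      rintro m' ⟨σ, hσ, hW⟩
      by_contra hne
      exact a2 ⟨(σ, n, m'), hne, hW⟩ hσ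
    constructor
    · intro h
      have := uniq _ h
      revert this
      cases b <;> cases Z n <;> simp [natOfBool]
    · rintro rfl
      obtain ⟨m', hm'⟩ := a1 n
      rw [← uniq _ hm']
      exact hm'
  obtain ⟨τ, hτ⟩ := density hg
  let T : (ℕ × Bool) × List Bool → Prop := fun q => q.2.take τ.length = τ ∧
    ∃ i : ℕ, WEnum e (Nat.pair (Encodable.encode (q.2.take i)) (Nat.pair q.1.1 (bif q.1.2 then 1 else 0)))
  have hT : Sig emptyOracle T := by
    have a1 : Sig emptyOracle (fun q : (ℕ × Bool) × List Bool => q.2.take τ.length = τ) :=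
      Sig.of_decide (by fun_prop)
    have a2 : Sig emptyOracle (fun q : ((ℕ × Bool) × List Bool) × ℕ =>
        WEnum e (Nat.pair (Encodable.encode (q.1.2.take q.2))
          (Nat.pair q.1.1.1 (bif q.1.1.2 then 1 else 0)))) :=
      Sig.wenum.comp (f := fun q : ((ℕ × Bool) × List Bool) × ℕ =>
        (e, Nat.pair (Encodable.encode (q.1.2.take q.2))
          (Nat.pair q.1.1.1 (bif q.1.1.2 then 1 else 0)))) (by fun_prop)
    exact a1.and a2.ex
  let D : ℕ → Bool → Set (ℕ → Bool) := fun n b => openOf {σ | T ((n, b), σ)}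
  have memD : ∀ n b Y, Y ∈ D n b ↔ Y ∈ cylinder τ ∧ OracleComputes e Y n (natOfBool b) := by
    intro n b Y
    simp only [D, mem_openOf, Set.mem_ofPred_eq, T, _root_.cylinder, OracleComputes]
    constructor
    · rintro ⟨t, a1, i, a2⟩
      have pr : ∀ i, IsPrefixOf ((strPrefix Y t).take i) Y := by
        intro i
        rw [isPrefixOf_iff]
        intro x hx
        simp only [List.length_take, length_strPrefix] at hx
        rw [List.getElem?_take, getElem?_strPrefix, if_pos (by omega), if_pos (by omega)]
      refine ⟨by rw [← a1]; exact pr _, _, pr i, a2⟩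
    · rintro ⟨a1, σ, a2, a3⟩
      rw [isPrefixOf_iff'] at a1 a2
      refine ⟨max τ.length σ.length, ?_, σ.length, ?_⟩
      · rw [take_strPrefix _ _ _ (le_max_left _ _), a1]
      · rw [take_strPrefix _ _ _ (le_max_right _ _), a2]
        exact a3
  set K := (Q B k l j \ N) ∩ cylinder τ with hK
  have hKm : m K = m (Q B k l j ∩ cylinder τ) := by
    simp only [m, measureReal_def]
    congr 1
    refine measure_congr ?_
    have h0 : N =ᵐ[μCantor] (∅ : Set (ℕ → Bool)) := ae_eq_empty.2 hN
    have h1 : (Q B k l j \ N : Set (ℕ → Bool)) =ᵐ[μCantor] (Q B k l j \ ∅ : Set (ℕ → Bool)) :=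
      Filter.EventuallyEq.diff (Filter.EventuallyEq.refl _ _) h0
    rw [Set.sdiff_empty] at h1
    exact h1.inter (Filter.EventuallyEq.refl _ _)
  have hp : (0:ℝ) < 2 ^ τ.length := by positivity
  have hτ2 : 1 < m K * 2 ^ (τ.length + 1) := by
    rw [hKm]
    rw [inv_pow, ← one_div, div_lt_iff₀ hp] at hτ
    rw [pow_succ]; linarith
  apply computable_of_sig
  refine (hT.threshold.comp (f := fun p : ℕ × Bool => (p, 1, τ.length + 1)) (by fun_prop)).of_eq ?_
  rintro ⟨n, b⟩
  show ((1 : ℕ) : ℝ) < m (D n b) * 2 ^ (τ.length + 1) ↔ Z n = b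
  rw [Nat.cast_one]
  constructor
  · intro h
    by_contra hne
    have d1 : Disjoint (D n b) K := by
      rw [Set.disjoint_left]
      intro Y a1 a2
      exact hne (((hY Y a2.1 n b).1 ((memD _ _ _).1 a1).2).symm)
    have d2 : m (D n b ∪ K) ≤ m (cylinder τ) := by
      refine m_mono (Set.union_subset (fun Y hY => ((memD _ _ _).1 hY).1) Set.inter_subset_right)
    have d3 : m (D n b ∪ K) = m (D n b) + m K :=
      measureReal_union' d1 (measurableSet_openOf _)
    rw [d3, m_cylinder, inv_pow, ← one_div, le_div_iff₀ hp] at d2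
    rw [pow_succ] at h hτ2
    nlinarith
  · rintro rfl
    refine hτ2.trans_le ?_
    gcongr
    refine m_mono fun Y a => (memD _ _ _).2 ⟨a.2, (hY Y a.1 n _).2 rfl⟩
end DM

end

section
open MeasureTheory ENNReal
namespace DM

theorem Sig.mem {α : Type*} [Primcodable α] {X : ℕ → Bool} {f : α → ℕ} {g : α → List ℕ}
    (hf : Computable f) (hg : Computable g) : Sig X (fun a => f a ∈ g a) := by
  have : Sig X (fun a => ∃ n ∈ g a, n = f a) :=
    Sig.mem_list (l := g) (p := fun a n => n = f a) hg
      (Sig.of_decide (c_eq (f := fun q : α × ℕ => q.2) (g := fun q => f q.1) (c_snd c_id) (by fun_prop)))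
  exact this.of_eq fun a => by simp

theorem Sig.sub {α : Type*} [Primcodable α] {X : ℕ → Bool} {f g : α → List ℕ}
    (hf : Computable f) (hg : Computable g) : Sig X (fun a => f a ⊆ g a) := by
  have h1 : Sig X (fun q : (α × ℕ) × ℕ => (f q.1.1)[q.1.2]? = some q.2 ∧ q.2 ∈ g q.1.1) :=
    (Sig.of_decide (by fun_prop)).and (Sig.mem (by fun_prop) (by fun_prop))
  refine (Sig.ball' (f := fun a => (f a).length)
    (p := fun a i => ∃ e, (f a)[i]? = some e ∧ e ∈ g a) (by fun_prop) h1.ex).of_eq fun a => ?_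
  constructor
  · intro h e he
    obtain ⟨i, hi⟩ := List.mem_iff_getElem?.1 he
    obtain ⟨e', h1, h2⟩ := h i (by by_contra hc; rw [List.getElem?_eq_none (by omega)] at hi; simp at hi)
    rw [hi] at h1
    simp at h1
    rwa [h1]
  · intro h i hi
    exact ⟨(f a)[i], by simp [hi], h (by simp)⟩

abbrev St := List ℕ × ℕ
abbrev Arg := (ℕ × Bool) × St × St

/-- bit steps -/
def R0 (k0 : ℕ × Bool → ℕ) (q : Arg) : Prop :=
  (q.1.1 % 4 = 0 ∧ q.2.2.2 = q.2.1.2) ∧ ∃ v : Bool, k0 (q.1.1 / 4, v) ∈ q.2.2.1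

/-- randomness steps -/
def R1 (k1 : ℕ × ℕ → ℕ) (q : Arg) : Prop :=
  (q.1.1 % 4 = 1 ∧ q.2.2.2 = q.2.1.2) ∧ ∃ n : ℕ, k1 (q.1.1 / 4, n) ∈ q.2.2.1

/-- divergence steps -/
def R2 (k2 : ℕ × ℕ → ℕ) (q : Arg) : Prop :=
  (q.1.1 % 4 = 2 ∧ q.2.2.2 = q.2.1.2) ∧ ∃ n : ℕ, k2 ((q.1.1 / 4).unpair.1, n) ∈ q.2.2.1

/-- disagreement steps -/
def R2' (A' : ℕ → Bool) (k3 : List Bool → ℕ) (q : Arg) : Prop :=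
  (q.1.1 % 4 = 2 ∧ q.2.2.2 = q.2.1.2) ∧ ∃ u : List Bool × ℕ × ℕ × ℕ,
    ((!decide (u.2.2.1 = u.2.2.2)) = true ∧
    WEnum (q.1.1 / 4).unpair.1 (Nat.pair (Encodable.encode u.1) (Nat.pair u.2.1 u.2.2.1))) ∧
    (OracleComputes (q.1.1 / 4).unpair.2 A' u.2.1 u.2.2.2 ∧ k3 u.1 ∈ q.2.2.1)

/-- coding steps -/
def R3 (B cls : ℕ → Bool) (kV kVc : ℕ → ℕ) (q : Arg) : Prop :=
  q.1.1 % 4 = 3 ∧ ∃ n : ℕ, ((q.2.2.2 = n + 1 ∧ q.2.1.2 ≤ n) ∧ (B n = true ∧ cls n = q.1.2)) ∧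
    (kVc n ∈ q.2.2.1 ∧ ∀ n' < n, (n' < q.2.1.2 ∨ B n' = false) ∨ kV n' ∈ q.2.2.1)

def E (A' B cls : ℕ → Bool) (k kV kVc : ℕ → ℕ) (k0 : ℕ × Bool → ℕ) (k1 k2 : ℕ × ℕ → ℕ)
    (k3 : List Bool → ℕ) (q : Arg) : Prop :=
  (q.2.1.1 ⊆ q.2.2.1 ∧ Good B k q.2.2.1 q.2.2.2) ∧
    (R0 k0 q ∨ R1 k1 q ∨ R2 k2 q ∨ R2' A' k3 q ∨ R3 B cls kV kVc q)

section
variable {A B cls : ℕ → Bool} {k kV kVc : ℕ → ℕ} {k0 : ℕ × Bool → ℕ} {k1 k2 : ℕ × ℕ → ℕ}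
    {k3 : List Bool → ℕ} {X : ℕ → Bool}

theorem hd (i : ℕ) : Sig X (fun q : Arg => q.1.1 % 4 = i ∧ q.2.2.2 = q.2.1.2) :=
  Sig.of_decide (p := fun q : Arg => q.1.1 % 4 = i) (by fun_prop) |>.and
    (Sig.of_decide (c_eq (f := fun q : Arg => q.2.2.2) (g := fun q => q.2.1.2)
      (c_snd (c_snd (c_snd c_id))) (c_snd (c_fst (c_snd c_id)))))

theorem R0_sig (h : Computable k0) : Sig X (R0 k0) :=
  (hd 0).and (Sig.ex' (p := fun (q : Arg) (v : Bool) => k0 (q.1.1 / 4, v) ∈ q.2.2.1)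
    (Sig.mem (f := fun q : Arg × Bool => k0 (q.1.1.1 / 4, q.2)) (by fun_prop) (by fun_prop)))

theorem R1_sig (h : Computable k1) : Sig X (R1 k1) :=
  (hd 1).and (Sig.ex' (p := fun (q : Arg) (v : ℕ) => k1 (q.1.1 / 4, v) ∈ q.2.2.1)
    (Sig.mem (f := fun q : Arg × ℕ => k1 (q.1.1.1 / 4, q.2)) (by fun_prop) (by fun_prop)))

theorem R2_sig (h : Computable k2) : Sig X (R2 k2) :=
  (hd 2).and (Sig.ex' (p := fun (q : Arg) (v : ℕ) => k2 ((q.1.1 / 4).unpair.1, v) ∈ q.2.2.1)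
    (Sig.mem (f := fun q : Arg × ℕ => k2 ((q.1.1.1 / 4).unpair.1, q.2)) (by fun_prop) (by fun_prop)))

theorem R2'_sig (h : Computable k3) : Sig X (R2' X k3) := by
  refine (hd 2).and (Sig.ex' ?_)
  refine Sig.and (Sig.and ?_ ?_) (Sig.and ?_ ?_)
  · exact Sig.of_dec (c_not (c_eq (f := fun q : Arg × List Bool × ℕ × ℕ × ℕ => q.2.2.2.1)
      (g := fun q => q.2.2.2.2) (by fun_prop) (by fun_prop)))
  · exact Sig.wenum.comp (f := fun q : Arg × List Bool × ℕ × ℕ × ℕ => ((q.1.1.1 / 4).unpair.1,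
      Nat.pair (Encodable.encode q.2.1) (Nat.pair q.2.2.1 q.2.2.2.1))) (by fun_prop)
  · exact Sig.oc.comp (f := fun q : Arg × List Bool × ℕ × ℕ × ℕ => ((q.1.1.1 / 4).unpair.2,
      q.2.2.1, q.2.2.2.2)) (by fun_prop)
  · exact Sig.mem (f := fun q : Arg × List Bool × ℕ × ℕ × ℕ => k3 q.2.1) (by fun_prop) (by fun_prop)

theorem R3_sig (hB : TuringLE B X) (hc : Computable cls) (h : Computable kV) (h' : Computable kVc) :
    Sig X (R3 B cls kV kVc) := by
  have hB := turingLE_iff.1 hB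
  refine Sig.and (Sig.of_decide (by fun_prop)) (Sig.ex' ?_)
  refine Sig.and (Sig.and (Sig.and ?_ ?_) (Sig.and ?_ ?_)) (Sig.and ?_ ?_)
  · exact Sig.of_decide (c_eq (f := fun q : Arg × ℕ => q.1.2.2.2) (g := fun q => q.2 + 1)
      (by fun_prop) (by fun_prop))
  · exact Sig.of_decide (c_le (f := fun q : Arg × ℕ => q.1.2.1.2) (g := fun q => q.2)
      (by fun_prop) (by fun_prop))
  · exact hB.comp (f := fun q : Arg × ℕ => (q.2, true)) (by fun_prop)
  · exact Sig.of_decide (c_eq (f := fun q : Arg × ℕ => cls q.2) (g := fun q => q.1.1.2)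
      (by fun_prop) (by fun_prop))
  · exact Sig.mem (f := fun q : Arg × ℕ => kVc q.2) (by fun_prop) (by fun_prop)
  · refine Sig.ball' (f := fun q : Arg × ℕ => q.2)
      (p := fun q n' => (n' < q.1.2.1.2 ∨ B n' = false) ∨ kV n' ∈ q.1.2.2.1) (by fun_prop) ?_
    refine Sig.or (Sig.or ?_ ?_) ?_
    · exact Sig.of_decide (c_lt (f := fun q : (Arg × ℕ) × ℕ => q.2) (g := fun q => q.1.1.2.1.2)
        (by fun_prop) (by fun_prop))
    · exact hB.comp (f := fun q : (Arg × ℕ) × ℕ => (q.2, false)) (by fun_prop)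
    · exact Sig.mem (f := fun q : (Arg × ℕ) × ℕ => kV q.2) (by fun_prop) (by fun_prop)

theorem E_sig (hB : TuringLE B A) (hk : Computable k) (hc : Computable cls) (h : Computable kV)
    (h' : Computable kVc) (h0 : Computable k0) (h1 : Computable k1) (h2 : Computable k2)
    (h3 : Computable k3) : Sig (jump A) (E (jump A) B cls k kV kVc k0 k1 k2 k3) := by
  refine Sig.and (Sig.and ?_ ?_) ((R0_sig h0).or ((R1_sig h1).or ((R2_sig h2).or ((R2'_sig h3).or
    (R3_sig (turingLE_trans hB turingLE_jump) hc h h')))))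
  · exact Sig.sub (f := fun q : Arg => q.2.1.1) (by fun_prop) (by fun_prop)
  · exact (good_sig hB hk).comp (f := fun q : Arg => q.2.2) (by fun_prop)

end

theorem isOpen_U (e : ℕ) : IsOpen (U e) := by
  have hc : ∀ τ : List Bool, IsOpen (cylinder τ) := by
    intro τ
    have : cylinder τ = ⋂ i : Fin τ.length, (fun Z : ℕ → Bool => Z i) ⁻¹' {τ.get i} := by
      ext Z
      simp [_root_.cylinder, IsPrefixOf]
    rw [this]
    exact isOpen_iInter_of_finite fun i => (isOpen_discrete _).preimage (continuous_apply _)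
  exact isOpen_biUnion fun τ _ => hc τ

end DM

end

section
open MeasureTheory ENNReal
namespace DM

def dec (c : ℕ) : St := (Encodable.decode c : Option St).getD ([], 0)

@[fun_prop] theorem c_dec {α : Type*} [Primcodable α] {f : α → ℕ} (hf : Computable f) :
    Computable (fun x => dec (f x)) := by
  unfold dec; fun_prop

theorem dec_encode (x : St) : dec (Encodable.encode x) = x := by
  rw [dec, Encodable.encodek, Option.getD_some]

/-- next hit relation -/
def Next (B R : ℕ → Bool) (k : ℕ → ℕ) (q : (ℕ × ℕ) × ℕ) : Prop :=
  ∃ n : ℕ, ((q.2 = n + 1 ∧ q.1.2 ≤ n) ∧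
    (B n = true ∧ ∀ i < k n, R (Nat.pair n i) = true)) ∧
    ∀ n' < n, (n' < q.1.2 ∨ B n' = false) ∨ ∃ i : ℕ, i < k n' ∧ R (Nat.pair n' i) = false

theorem next_sig {B R Y : ℕ → Bool} {k : ℕ → ℕ} (hk : Computable k) (hB : TuringLE B Y)
    (hR : TuringLE R Y) : Sig Y (Next B R k) := by
  have hB' := turingLE_iff.1 hB
  have hR' := turingLE_iff.1 hR
  refine Sig.ex' (Sig.and (Sig.and (Sig.and ?_ ?_) (Sig.and ?_ ?_)) ?_)
  · exact Sig.of_decide (c_eq (f := fun q : ((ℕ × ℕ) × ℕ) × ℕ => q.1.2) (g := fun q => q.2 + 1)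
      (by fun_prop) (by fun_prop))
  · exact Sig.of_decide (c_le (f := fun q : ((ℕ × ℕ) × ℕ) × ℕ => q.1.1.2) (g := fun q => q.2)
      (by fun_prop) (by fun_prop))
  · exact hB'.comp (f := fun q : ((ℕ × ℕ) × ℕ) × ℕ => (q.2, true)) (by fun_prop)
  · exact Sig.ball' (f := fun q : ((ℕ × ℕ) × ℕ) × ℕ => k q.2)
      (p := fun q i => R (Nat.pair q.2 i) = true) (by fun_prop)
      (hR'.comp (f := fun q : (((ℕ × ℕ) × ℕ) × ℕ) × ℕ => (Nat.pair q.1.2 q.2, true)) (by fun_prop))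
  · refine Sig.ball' (f := fun q : ((ℕ × ℕ) × ℕ) × ℕ => q.2)
      (p := fun q n' => (n' < q.1.1.2 ∨ B n' = false) ∨
        ∃ i : ℕ, i < k n' ∧ R (Nat.pair n' i) = false) (by fun_prop) ?_
    refine Sig.or (Sig.or ?_ ?_) (Sig.ex' (Sig.and ?_ ?_))
    · exact Sig.of_decide (c_lt (f := fun q : (((ℕ × ℕ) × ℕ) × ℕ) × ℕ => q.2)
        (g := fun q => q.1.1.1.2) (by fun_prop) (by fun_prop))
    · exact hB'.comp (f := fun q : (((ℕ × ℕ) × ℕ) × ℕ) × ℕ => (q.2, false)) (by fun_prop)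
    · exact Sig.of_decide (c_lt (f := fun q : ((((ℕ × ℕ) × ℕ) × ℕ) × ℕ) × ℕ => q.2)
        (g := fun q => k q.1.2) (by fun_prop) (by fun_prop))
    · exact hR'.comp (f := fun q : ((((ℕ × ℕ) × ℕ) × ℕ) × ℕ) × ℕ =>
        (Nat.pair q.1.2 q.2, false)) (by fun_prop)

set_option maxHeartbeats 1600000 in
theorem main (A : ℕ → Bool) (hA : ¬ KTrivial A)
    (X : ℕ → Bool) (hX : TuringLE (jump (jump A)) X) :
    ∃ R : ℕ → Bool, MLRandom R ∧ ¬ TuringLE zeroJump R ∧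
      TuringEquiv (joinSet A R) X ∧
      ∀ Z : ℕ → Bool, TuringLE Z A → TuringLE Z R → ComputableSet Z := by
  obtain ⟨B, k, cls, hk, hcls, hBA, hBdd, hKT⟩ := KT A hA
  obtain ⟨kV, hkV, uV⟩ := idx_V hk
  obtain ⟨kVc, hkVc, uVc⟩ := idx_Vc hk
  obtain ⟨k0, hk0, u0⟩ := idx_bit
  obtain ⟨k1, hk1, u1⟩ := idx_test
  obtain ⟨k2, hk2, u2⟩ := idx_dom
  obtain ⟨k3, hk3, u3⟩ := idx_cyl
  have hA'X : TuringLE (jump A) X := turingLE_trans turingLE_jump hX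
  have hAX : TuringLE A X := turingLE_trans turingLE_jump hA'X
  let Ev : Arg → Prop := E (jump A) B cls k kV kVc k0 k1 k2 k3
  have hEv : Sig (jump A) Ev := E_sig hBA hk hcls hkV hkVc hk0 hk1 hk2 hk3
  obtain ⟨j0, hj0⟩ := good_init hBdd
  -- the step relation
  let D : (ℕ × ℕ) × ℕ → Prop := fun q => ∃ b : Bool, X (q.1.1 / 4) = b ∧
    (Ev ((q.1.1, b), dec q.1.2, dec q.2) ∨
      (q.2 = q.1.2 ∧ ¬ ∃ c : ℕ, Ev ((q.1.1, b), dec q.1.2, dec c)))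
  have hD : Sig X D := by
    have a1 : Sig X (fun q : ((ℕ × ℕ) × ℕ) × Bool => X (q.1.1.1 / 4) = q.2) :=
      Sig.oracle.comp (f := fun q : ((ℕ × ℕ) × ℕ) × Bool => (q.1.1.1 / 4, q.2)) (by fun_prop)
    have a2 : Sig X (fun q : ((ℕ × ℕ) × ℕ) × Bool => Ev ((q.1.1.1, q.2), dec q.1.1.2, dec q.1.2)) :=
      (hEv.trans hA'X).comp (f := fun q : ((ℕ × ℕ) × ℕ) × Bool =>
        ((q.1.1.1, q.2), dec q.1.1.2, dec q.1.2)) (by fun_prop)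
    have a3 : Sig X (fun q : ((ℕ × ℕ) × ℕ) × Bool => q.1.2 = q.1.1.2) := Sig.of_decide (by fun_prop)
    have a4 : Sig (jump A) (fun q : ((ℕ × ℕ) × ℕ) × Bool => ∃ c : ℕ,
        Ev ((q.1.1.1, q.2), dec q.1.1.2, dec c)) :=
      Sig.ex' (hEv.comp (f := fun q : (((ℕ × ℕ) × ℕ) × Bool) × ℕ =>
        ((q.1.1.1.1, q.1.2), dec q.1.1.1.2, dec q.2)) (by fun_prop))
    exact (a1.and (a2.or (a3.and (a4.not_jump.trans hX)))).ex
  have tot : ∀ a, ∃ b, D (a, b) := by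
    intro a
    by_cases h : ∃ c : ℕ, Ev ((a.1, X (a.1 / 4)), dec a.2, dec c)
    · obtain ⟨c, hc⟩ := h
      exact ⟨c, _, rfl, Or.inl hc⟩
    · exact ⟨a.2, _, rfl, Or.inr ⟨rfl, h⟩⟩
  obtain ⟨f, f0, fD, fS⟩ := iterate hD tot (Encodable.encode (([], j0) : St))
  let st : ℕ → St := fun s => dec (f s)
  have st0 : st 0 = ([], j0) := by simp only [st, f0, dec_encode]
  have stepE : ∀ s, (∃ c : St, Ev ((s, X (s / 4)), st s, c)) → Ev ((s, X (s / 4)), st s, st (s + 1)) := by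
    rintro s ⟨c, hc⟩
    obtain ⟨b, hb, h | ⟨-, h⟩⟩ := fD s
    · simp only at hb h; rw [hb]; exact h
    · simp only at hb h
      subst hb
      exact absurd ⟨Encodable.encode c, by rw [dec_encode]; exact hc⟩ h
  have step : ∀ s, Ev ((s, X (s / 4)), st s, st (s + 1)) ∨ st (s + 1) = st s := by
    intro s
    obtain ⟨b, hb, h | ⟨h, -⟩⟩ := fD s
    · left; simp only at hb h; rw [hb]; exact h
    · right; simp only at h; simp only [st, h]
  have good : ∀ s, Good B k (st s).1 (st s).2 := by
    intro s
    induction s with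
    | zero => rw [st0]; exact hj0
    | succ s ih =>
      rcases step s with h | h
      · exact h.1.2
      · rw [h]; exact ih
  have sub : ∀ s, (st s).1 ⊆ (st (s + 1)).1 := by
    intro s
    rcases step s with h | h
    · exact h.1.1
    · rw [h]; exact List.Subset.refl _
  have Jst : ∀ s, s % 4 ≠ 3 → (st (s + 1)).2 = (st s).2 := by
    intro s hs
    rcases step s with h | h
    · rcases h.2 with h | h | h | h | h
      · exact h.1.2
      · exact h.1.2
      · exact h.1.2
      · exact h.1.2
      · exact absurd h.1 hs
    · rw [h]
  -- the random sequence
  obtain ⟨R, hR⟩ : ∃ R : ℕ → Bool, ∀ s, ∀ e ∈ (st s).1, R ∉ U e := by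
    let P : ℕ → Set (ℕ → Bool) := fun s => ⋂ e ∈ (st s).1, (U e)ᶜ
    have cl : ∀ s, IsClosed (P s) := fun s =>
      isClosed_biInter fun e _ => (isOpen_U e).isClosed_compl
    have := IsCompact.nonempty_iInter_of_sequence_nonempty_isCompact_isClosed P
      (fun s Z hZ => by
        simp only [P, Set.mem_iInter] at hZ ⊢
        exact fun e he => hZ e (sub s he))
      (fun s => by
        have h : Q B k (st s).1 (st s).2 ≠ ∅ := by
          intro h
          have := good s
          rw [Good, h] at this
          simp [m] at this
        obtain ⟨Z, hZ⟩ := Set.nonempty_iff_ne_empty.2 h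
        exact ⟨Z, by simp only [P, Set.mem_iInter]; exact fun e he => hZ.1 e he⟩)
      (cl 0).isCompact cl
    obtain ⟨R, hR⟩ := this
    refine ⟨R, fun s e he => ?_⟩
    have := Set.mem_iInter.1 hR s
    simp only [P, Set.mem_iInter] at this
    exact this e he
  -- cone avoidance
  have cone : ∀ Z : ℕ → Bool, TuringLE Z (jump A) → TuringLE Z R → ComputableSet Z := by
    rintro Z ⟨a, ha⟩ ⟨e, he⟩
    have s4 : (4 * Nat.pair e a + 2) / 4 = Nat.pair e a := by omega
    have sm : (4 * Nat.pair e a + 2) % 4 = 2 := by omega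
    set s := 4 * Nat.pair e a + 2 with hs
    by_cases hex : ∃ c : St, Ev ((s, X (s / 4)), st s, c)
    · exfalso
      have h := stepE s hex
      rcases h.2 with h | h | h | h | h
      · have := h.1.1; simp only [sm] at this; omega
      · have := h.1.1; simp only [sm] at this; omega
      · obtain ⟨-, n, hn⟩ := h
        have := hR _ _ hn
        simp only [s4, Nat.unpair_pair] at this
        rw [u2] at this
        exact this ⟨_, (he n _).2 rfl⟩
      · obtain ⟨-, ⟨τ, n, m1, m2⟩, ⟨h1, h2⟩, h3, h4⟩ := h
        have := hR _ _ h4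
        simp only [s4, Nat.unpair_pair] at this h1 h2 h3
        rw [u3] at this
        simp only [Set.mem_compl_iff, not_not] at this
        have g1 := (he n m1).1 ⟨τ, this, h2⟩
        have g2 := (ha n m2).1 h3
        rw [g1, g2] at h1
        simp at h1
      · have := h.1; simp only [sm] at this; omega
    · refine cone_step (k2 := k2) (k3 := k3) u2 u3 (good s) e Z ?_ ?_
      · intro n hg
        refine hex ⟨(k2 (e, n) :: (st s).1, (st s).2), ⟨fun x hx => List.mem_cons_of_mem _ hx, hg⟩, ?_⟩
        right; right; left
        exact ⟨⟨sm, rfl⟩, n, by simp [s4]⟩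
      · intro τ n m' hne hW hg
        refine hex ⟨(k3 τ :: (st s).1, (st s).2), ⟨fun x hx => List.mem_cons_of_mem _ hx, hg⟩, ?_⟩
        right; right; right; left
        refine ⟨⟨sm, rfl⟩, (τ, n, m', natOfBool (Z n)), ⟨by simpa using hne, ?_⟩, ?_, by simp⟩
        · simpa only [s4, Nat.unpair_pair] using hW
        · simp only [s4, Nat.unpair_pair]
          exact (ha n _).2 rfl
  -- reducibility to X
  have bits : ∀ r b, R r = b ↔ k0 (r, b) ∈ (st (4 * r + 1)).1 := by
    intro r b
    have mem : ∀ b, k0 (r, b) ∈ (st (4 * r + 1)).1 → R r = b := by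
      intro b hb
      have := hR _ _ hb
      rw [u0] at this
      simpa using this
    refine ⟨?_, mem b⟩
    rintro rfl
    have s4 : (4 * r) / 4 = r := by omega
    have sm : (4 * r) % 4 = 0 := by omega
    obtain ⟨v, hv⟩ := bit_step u0 (good (4 * r)) r
    have h := stepE (4 * r) ⟨(k0 (r, v) :: (st (4 * r)).1, (st (4 * r)).2),
      ⟨fun x hx => List.mem_cons_of_mem _ hx, hv⟩, Or.inl ⟨⟨sm, rfl⟩, v, by simp [s4]⟩⟩
    rcases h.2 with h | h | h | h | h
    · obtain ⟨-, w, hw⟩ := h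
      simp only [s4] at hw
      rw [mem w hw]
      exact hw
    · have := h.1.1; simp only [sm] at this; omega
    · have := h.1.1; simp only [sm] at this; omega
    · have := h.1.1; simp only [sm] at this; omega
    · have := h.1; simp only [sm] at this; omega
  have hRX : TuringLE R X := by
    rw [turingLE_iff]
    have a1 : Sig X (fun q : (ℕ × Bool) × ℕ => f (4 * q.1.1 + 1) = q.2) :=
      fS.comp (f := fun q : (ℕ × Bool) × ℕ => (4 * q.1.1 + 1, q.2)) (by fun_prop)
    have a2 : Sig X (fun q : (ℕ × Bool) × ℕ => k0 q.1 ∈ (dec q.2).1) :=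
      Sig.mem (f := fun q : (ℕ × Bool) × ℕ => k0 q.1) (by fun_prop) (by fun_prop)
    refine (a1.and a2).ex.of_eq ?_
    rintro ⟨r, b⟩
    rw [bits]
    simp [st]
  -- decoding
  have code : ∀ r, ∃ n, (st (4 * r + 3 + 1)).2 = n + 1 ∧ (st (4 * r + 3)).2 ≤ n ∧ B n = true ∧
      cls n = X r ∧ R ∈ V k n ∧ ∀ n' < n, n' < (st (4 * r + 3)).2 ∨ B n' = false ∨ R ∉ V k n' := by
    intro r
    have s4 : (4 * r + 3) / 4 = r := by omega
    have sm : (4 * r + 3) % 4 = 3 := by omega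
    obtain ⟨n, h1, h2, h3, l', h4, h5, h6, h7⟩ :=
      coding hk hBdd hKT hkVc uV uVc (good (4 * r + 3)) (X r)
    have h := stepE (4 * r + 3) ⟨(l', n + 1), ⟨h4, h7⟩, by
      right; right; right; right
      refine ⟨sm, n, ⟨⟨rfl, h1⟩, h2, ?_⟩, h5, fun n' hn' => ?_⟩
      · simp only [s4]; exact h3
      · rcases h6 n' hn' with h | h | h
        · exact Or.inl (Or.inl h)
        · exact Or.inl (Or.inr h)
        · exact Or.inr h⟩
    rcases h.2 with h | h | h | h | h
    · have := h.1.1; simp only [sm] at this; omega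
    · have := h.1.1; simp only [sm] at this; omega
    · have := h.1.1; simp only [sm] at this; omega
    · have := h.1.1; simp only [sm] at this; omega
    · obtain ⟨-, n, ⟨⟨a1, a2⟩, a3, a4⟩, a5, a6⟩ := h
      simp only [s4] at a1 a2 a3 a4 a5 a6
      refine ⟨n, a1, a2, a3, a4, ?_, fun n' hn' => ?_⟩
      · have := hR _ _ a5
        rw [uVc] at this
        simpa using this
      · rcases a6 n' hn' with (h | h) | h
        · exact Or.inl h
        · exact Or.inr (Or.inl h)
        · have := hR _ _ h
          rw [uV] at this
          exact Or.inr (Or.inr this)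
  let h : ℕ → ℕ := fun r => (st (4 * r)).2
  have hJ : ∀ r, (st (4 * r + 3)).2 = h r := by
    intro r
    rw [Jst (4 * r + 2) (by omega), Jst (4 * r + 1) (by omega), Jst (4 * r) (by omega)]
  let N : (ℕ × ℕ) × ℕ → Prop := Next B R k
  have hRJ := right_le_join A R
  have hBJ : TuringLE B (joinSet A R) := turingLE_trans hBA (left_le_join A R)
  have hN : Sig (joinSet A R) N := next_sig hk hBJ hRJ
  have fn : ∀ s c b b', N ((s, c), b) → N ((s, c), b') → b = b' := by
    have key : ∀ s c n n', (c ≤ n ∧ (B n = true ∧ ∀ i < k n, R (Nat.pair n i) = true)) →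
        N ((s, c), n') → n' ≤ n + 1 := by
      rintro s c n n' ⟨h1, h2, h3⟩ ⟨x, ⟨⟨g1, g2⟩, g3⟩, g4⟩
      simp only at g1 g2 g4
      by_contra hlt
      rcases g4 n (by omega) with (h | h) | ⟨i, hi, h⟩
      · omega
      · rw [h2] at h; exact absurd h (by simp)
      · rw [h3 i hi] at h; exact absurd h (by simp)
    intro s c b b' h1 h2
    obtain ⟨n, ⟨⟨a1, a2⟩, a3⟩, -⟩ := id h1
    obtain ⟨n', ⟨⟨b1, b2⟩, b3⟩, -⟩ := id h2
    have c1 := key s c n b' ⟨a2, a3⟩ h2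
    have c2 := key s c n' b ⟨b2, b3⟩ h1
    simp only at a1 b1
    omega
  have hh : ∀ r, N ((r, h r), h (r + 1)) := by
    intro r
    obtain ⟨n, a1, a2, a3, a4, a5, a6⟩ := code r
    rw [hJ] at a2 a6
    refine ⟨n, ⟨⟨a1, a2⟩, a3, a5⟩, fun n' hn' => ?_⟩
    rcases a6 n' hn' with h | h | h
    · exact Or.inl (Or.inl h)
    · exact Or.inl (Or.inr h)
    · right
      simp only [V, Set.mem_ofPred_eq, not_forall, Bool.not_eq_true, exists_prop] at h
      exact h
  have hG := iter_graph hN fn h hh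
  have hXJ : TuringLE X (joinSet A R) := by
    rw [turingLE_iff]
    have a1 : Sig (joinSet A R) (fun q : (ℕ × Bool) × ℕ => h (q.1.1 + 1) = q.2 + 1) :=
      hG.comp (f := fun q : (ℕ × Bool) × ℕ => (q.1.1 + 1, q.2 + 1)) (by fun_prop)
    have a2 : Sig (joinSet A R) (fun q : (ℕ × Bool) × ℕ => cls q.2 = q.1.2) :=
      Sig.of_decide (by fun_prop)
    refine (a1.and a2).ex.of_eq ?_
    rintro ⟨r, b⟩
    obtain ⟨n, a1, a2, a3, a4, -⟩ := code r
    have e1 : h (r + 1) = n + 1 := a1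
    simp only [e1]
    constructor
    · rintro ⟨x, hx, rfl⟩
      have : n = x := by omega
      rw [← this, a4]
    · rintro rfl
      exact ⟨n, rfl, a4⟩
  refine ⟨R, ?_, ?_, ⟨join_le hAX hRX, hXJ⟩, ?_⟩
  · rintro G ⟨⟨e, he⟩, hG⟩
    have s4 : (4 * e + 1) / 4 = e := by omega
    have sm : (4 * e + 1) % 4 = 1 := by omega
    obtain ⟨n, hn⟩ := ml_step u1 (good (4 * e + 1)) e (fun n => by rw [← he]; exact hG n)
    have h := stepE (4 * e + 1) ⟨(k1 (e, n) :: (st (4 * e + 1)).1, (st (4 * e + 1)).2),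
      ⟨fun x hx => List.mem_cons_of_mem _ hx, hn⟩, Or.inr (Or.inl ⟨⟨sm, rfl⟩, n, by simp [s4]⟩)⟩
    rcases h.2 with h | h | h | h | h
    · have := h.1.1; simp only [sm] at this; omega
    · obtain ⟨-, w, hw⟩ := h
      simp only [s4] at hw
      have := hR _ _ hw
      rw [u1, ← he] at this
      exact ⟨w, this⟩
    · have := h.1.1; simp only [sm] at this; omega
    · have := h.1.1; simp only [sm] at this; omega
    · have := h.1; simp only [sm] at this; omega
  · intro hz
    exact zeroJump_not_computable (cone zeroJump zeroJump_le hz)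
  · intro Z hZA hZR
    exact cone Z (turingLE_trans hZA turingLE_jump) hZR
end DM

end

/-- final corollary of Day–Miller: cupping to any `X ≥_T A″`
with an incomplete random forming a minimal pair with `A`. -/
theorem stmt19 (A : ℕ → Bool) (hA : ¬ KTrivial A)
    (X : ℕ → Bool) (hX : TuringLE (jump (jump A)) X) :
    ∃ R : ℕ → Bool, MLRandom R ∧ ¬ TuringLE zeroJump R ∧
      TuringEquiv (joinSet A R) X ∧
      ∀ Z : ℕ → Bool, TuringLE Z A → TuringLE Z R → ComputableSet Z := by
  exact DM.main A hA X hX
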